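/- arXiv:2504.18285 — 9 statements merged into one kernel-verified Lean document; each statement's English description precedes it below -/
import Mathlib

section
/- Let c ∈ ℝ, let Ω ⊆ ℂ² be open, and let ψ : Ω → ℂ be holomorphic satisfying the focusing MKdV equation over ℂ with real parameter c on all of Ω. Then the imaginary part ψᵢ satisfies, at every point of Ω, the defocusing gauged MKdV equation: (∂_{u₁ᵣ} − (c − (3/8)(∂_{u₂ᵣ}ψᵣ)²)·∂_{u₂ᵣ})ψᵢ − (1/8)(∂_{u₂ᵣ}ψᵢ)³ + (1/4)∂_{u₂ᵣ}³ψᵢ = 0. -/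
/-!
On functions holomorphic on an open set, `∂_{u_aᵣ}` commutes with taking real and imaginary parts and
agrees there with the complex derivative `∂_{u_a}`. The result is therefore the imaginary part of the
MKdV equation: with `∂_{u₂}ψ = p + √-1 q`, the cubic term contributes
`Im (p + √-1 q)³ = 3 p² q - q³`.

The third-order term requires the successive derivatives `∂_{u₂}ψ`, `∂_{u₂}²ψ` to be Fréchet
differentiable again. This is `differentiableOn_fderiv_apply`, obtained by differentiating
under the integral sign in Cauchy's formula `2π√-1 · Dψ(u)v = ∮ ψ(u + zv) / z² dz`; the domination
comes from the Cauchy estimate along complex lines (`norm_fderiv_le_of_norm_le_on_ball`).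
-/

open Metric Filter Topology



/-- Complex partial derivative along the `a`-th complex coordinate of `ℂ²`. -/
noncomputable def pC (a : Fin 2) (f : (Fin 2 → ℂ) → ℂ) : (Fin 2 → ℂ) → ℂ :=
  fun u => fderiv ℂ f u (Pi.single a 1)

/-- Real partial derivative in the real direction of the `a`-th complex coordinate. -/
noncomputable def pR (a : Fin 2) (f : (Fin 2 → ℂ) → ℝ) : (Fin 2 → ℂ) → ℝ :=
  fun u => fderiv ℝ f u (Pi.single a 1)

/-- Real partial derivative in the imaginary direction of the `a`-th complex coordinate. -/
noncomputable def pI (a : Fin 2) (f : (Fin 2 → ℂ) → ℝ) : (Fin 2 → ℂ) → ℝ :=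
  fun u => fderiv ℝ f u (Pi.single a Complex.I)

section HolomorphicDerivative

variable {E : Type*} [NormedAddCommGroup E] [NormedSpace ℂ E]

/-- If the disc of radius `R` on the complex line through `u` in direction `v` lies in `Ω`, the
restriction of `f` to this line is holomorphic there. -/
lemma differentiableOn_line {Ω : Set E} (hΩ : IsOpen Ω) {f : E → ℂ}
    (hf : DifferentiableOn ℂ f Ω) {u v : E} {R : ℝ}
    (h : ∀ z : ℂ, ‖z‖ ≤ R → u + z • v ∈ Ω) :
    DifferentiableOn ℂ (fun z : ℂ => f (u + z • v)) (closedBall 0 R) := by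
  intro z hz
  have hz' : u + z • v ∈ Ω := h z (by simpa using hz)
  have h1 : DifferentiableAt ℂ f (u + z • v) := hf.differentiableAt (hΩ.mem_nhds hz')
  exact (DifferentiableAt.comp z h1 (by fun_prop)).differentiableWithinAt

lemma deriv_line {f : E → ℂ} {u : E} (hf : DifferentiableAt ℂ f u) (v : E) :
    deriv (fun z : ℂ => f (u + z • v)) 0 = fderiv ℂ f u v := by
  have h2 : HasDerivAt (fun z : ℂ => u + z • v) v 0 := by
    simpa using ((hasDerivAt_id (0 : ℂ)).smul_const v).const_add u
  have h1 : HasFDerivAt f (fderiv ℂ f u) (u + (0 : ℂ) • v) := by simpa using hf.hasFDerivAt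
  exact (h1.comp_hasDerivAt (0 : ℂ) h2).deriv

/-- Cauchy estimate for the Fréchet derivative. -/
lemma norm_fderiv_le_of_norm_le_on_ball {Ω : Set E} (hΩ : IsOpen Ω) {f : E → ℂ}
    (hf : DifferentiableOn ℂ f Ω) {u : E} {r M : ℝ} (hr : 0 < r)
    (hsub : closedBall u r ⊆ Ω) (hM : ∀ x ∈ closedBall u r, ‖f x‖ ≤ M) :
    ‖fderiv ℂ f u‖ ≤ M / r := by
  have hu : u ∈ closedBall u r := mem_closedBall_self hr.le
  have hM0 : 0 ≤ M := (norm_nonneg _).trans (hM u hu)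
  refine ContinuousLinearMap.opNorm_le_bound _ (by positivity) fun v => ?_
  rcases eq_or_ne v 0 with rfl | hv
  · simp
  have hv' : 0 < ‖v‖ := norm_pos_iff.2 hv
  have hmem : ∀ z : ℂ, ‖z‖ ≤ r / ‖v‖ → u + z • v ∈ closedBall u r := by
    intro z hz
    rw [le_div_iff₀ hv'] at hz
    simpa [dist_eq_norm, norm_smul] using hz
  have hd := differentiableOn_line hΩ hf (R := r / ‖v‖) (v := v)
    (fun z hz => hsub (hmem z hz))
  have := Complex.norm_deriv_le_of_forall_mem_sphere_norm_le (C := M) (div_pos hr hv')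
    (hd.mono closure_ball_subset_closedBall).diffContOnCl
    (fun z hz => hM _ (hmem z (by simpa using (sphere_subset_closedBall hz))))
  rw [deriv_line (hf.differentiableAt (hΩ.mem_nhds (hsub hu)))] at this
  calc _ ≤ _ := this
    _ = _ := by field_simp

/-- Directional derivatives of a holomorphic function of several variables are holomorphic. -/
lemma differentiableOn_fderiv_apply [FiniteDimensional ℂ E] {Ω : Set E}
    (hΩ : IsOpen Ω) {f : E → ℂ} (hf : DifferentiableOn ℂ f Ω) {v : E} (hv : ‖v‖ ≤ 1) :
    DifferentiableOn ℂ (fun u => fderiv ℂ f u v) Ω := by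
  intro u₀ hu₀
  refine DifferentiableAt.differentiableWithinAt ?_
  let _ : MeasurableSpace E := borel E
  have : BorelSpace E := ⟨rfl⟩
  have hcont := hf.continuousOn
  have hev : ∀ᶠ x in 𝓝 u₀, x ∈ Ω ∧ ‖f x‖ < ‖f u₀‖ + 1 :=
    (hΩ.eventually_mem hu₀).and
      ((hcont.continuousAt (hΩ.mem_nhds hu₀)).norm.eventually_lt_const (by linarith))
  obtain ⟨ρ, hρ, hball⟩ := Metric.eventually_nhds_iff.1 hev
  -- The base point moves by `r`, the Cauchy circle has radius `r`, and the Cauchy estimate uses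
  -- discs of radius `r` around the points of that circle: in total less than `4 r = ρ`.
  obtain ⟨r, hr, hrρ⟩ : ∃ r : ℝ, 0 < r ∧ 4 * r = ρ := ⟨ρ / 4, by positivity, by ring⟩
  set M := ‖f u₀‖ + 1 with hMdef
  have hline : ∀ x ∈ ball u₀ r, ∀ z : ℂ, ‖z‖ ≤ r → dist (x + z • v) u₀ < 2 * r := by
    intro x hx z hz
    have h1 : dist (x + z • v) x ≤ r := by
      rw [dist_eq_norm, add_sub_cancel_left, norm_smul]
      nlinarith [norm_nonneg z, norm_nonneg v]
    have := dist_triangle (x + z • v) x u₀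
    have := mem_ball.1 hx
    linarith
  have hlineΩ : ∀ x ∈ ball u₀ r, ∀ z : ℂ, ‖z‖ ≤ r → x + z • v ∈ Ω := fun x hx z hz =>
    (hball (by linarith [hline x hx z hz])).1
  have hDf : ∀ y, dist y u₀ < 2 * r → ‖fderiv ℂ f y‖ ≤ M / r := by
    intro y hy
    have hy' : ∀ x ∈ closedBall y r, dist x u₀ < ρ := fun x hx => by
      have := dist_triangle x y u₀
      have := mem_closedBall.1 hx
      linarith
    exact norm_fderiv_le_of_norm_le_on_ball hΩ hf hr (fun x hx => (hball (hy' x hx)).1)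
      (fun x hx => (hball (hy' x hx)).2.le)
  have hcm : ∀ t, ‖circleMap 0 r t‖ = r := fun t => by simp [abs_of_pos hr]
  have hcm0 : ∀ t, circleMap 0 r t ≠ 0 := fun t => by
    rw [← norm_pos_iff, hcm]; exact hr
  let k : ℝ → ℂ := fun t => deriv (circleMap 0 r) t * (1 / (circleMap 0 r t) ^ 2)
  have hk : Continuous k := by
    have : Continuous (circleMap 0 r) := continuous_circleMap 0 r
    have h2 : Continuous fun t => (circleMap 0 r t) ^ 2 := by fun_prop
    simp only [k, deriv_circleMap]
    exact (this.mul continuous_const).mul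
      (continuous_const.div h2 fun t => pow_ne_zero _ (hcm0 t))
  have hFcont : ∀ x ∈ ball u₀ r, Continuous fun t => k t • f (x + circleMap 0 r t • v) := by
    intro x hx
    refine hk.smul (hcont.comp_continuous ?_ fun t => hlineΩ x hx _ (hcm t).le)
    have : Continuous (circleMap 0 r) := continuous_circleMap 0 r
    fun_prop
  have key := intervalIntegral.hasFDerivAt_integral_of_dominated_of_fderiv_le
    (μ := MeasureTheory.volume) (a := 0) (b := 2 * Real.pi) (x₀ := u₀) (𝕜 := ℂ)
    (F := fun x t => k t • f (x + circleMap 0 r t • v))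
    (F' := fun x t => k t • fderiv ℂ f (x + circleMap 0 r t • v))
    (bound := fun t => ‖k t‖ * (M / r)) (ball_mem_nhds u₀ hr)
    (by
      filter_upwards [ball_mem_nhds u₀ hr] with x hx
      exact (hFcont x hx).aestronglyMeasurable)
    ((hFcont u₀ (mem_ball_self hr)).intervalIntegrable _ _)
    (by
      have h1 : Continuous fun t => u₀ + circleMap 0 r t • v := by
        have : Continuous (circleMap 0 r) := continuous_circleMap 0 r
        fun_prop
      let _ : MeasurableSpace (E →L[ℂ] ℂ) := borel _
      have : BorelSpace (E →L[ℂ] ℂ) := ⟨rfl⟩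
      have : FiniteDimensional ℂ (E →L[ℂ] ℂ) := inferInstance
      have : ProperSpace (E →L[ℂ] ℂ) := FiniteDimensional.proper ℂ _
      have h2 : Measurable fun t => fderiv ℂ f (u₀ + circleMap 0 r t • v) :=
        (measurable_fderiv ℂ f).comp h1.measurable
      exact hk.aestronglyMeasurable.smul h2.aestronglyMeasurable)
    (by
      refine Eventually.of_forall fun t _ x hx => ?_
      rw [norm_smul]
      exact mul_le_mul_of_nonneg_left (hDf _ (hline x hx _ (hcm t).le)) (norm_nonneg _))
    ((hk.norm.mul continuous_const).intervalIntegrable _ _)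
    (by
      refine Eventually.of_forall fun t _ x hx => ?_
      have h1 := (hf.differentiableAt (hΩ.mem_nhds (hlineΩ x hx _ (hcm t).le))).hasFDerivAt
      exact ((hasFDerivAt_comp_add_right _).2 h1).const_smul (k t))
  refine (key.differentiableAt.const_mul (2 * Real.pi * Complex.I)⁻¹).congr_of_eventuallyEq ?_
  filter_upwards [ball_mem_nhds u₀ hr] with x hx
  have hx' : x ∈ Ω := by simpa using hlineΩ x hx 0 (by simpa using hr.le)
  have h1 := (differentiableOn_line hΩ hf (hlineΩ x hx)).deriv_eq_smul_circleIntegral hr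
  rw [deriv_line (hf.differentiableAt (hΩ.mem_nhds hx')), circleIntegral] at h1
  have h2 : ∫ t in (0 : ℝ)..2 * Real.pi, k t • f (x + circleMap 0 r t • v)
      = (2 * Real.pi * Complex.I) * fderiv ℂ f x v := by
    rw [smul_eq_mul] at h1
    rw [← h1]
    refine intervalIntegral.integral_congr fun t _ => ?_
    simp only [k, smul_eq_mul, sub_zero, mul_assoc]
  rw [h2, inv_mul_cancel_left₀ Complex.two_pi_I_ne_zero]

end HolomorphicDerivative

lemma differentiableOn_pC {Ω : Set (Fin 2 → ℂ)} (hΩ : IsOpen Ω) {f : (Fin 2 → ℂ) → ℂ}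
    (hf : DifferentiableOn ℂ f Ω) (a : Fin 2) : DifferentiableOn ℂ (pC a f) Ω :=
  differentiableOn_fderiv_apply hΩ hf (v := Pi.single a 1) (by simp [Pi.norm_single])

/-- The real partial derivative commutes with composition by a real-linear map `L : ℂ → ℝ`, applied
below to the real and imaginary parts. -/
lemma pR_comp_clm (L : ℂ →L[ℝ] ℝ) {f : (Fin 2 → ℂ) → ℂ} {u : Fin 2 → ℂ}
    (hf : DifferentiableAt ℂ f u) (a : Fin 2) :
    pR a (fun x => L (f x)) u = L (pC a f u) := by
  have h : HasFDerivAt (fun x => L (f x)) (L.comp ((fderiv ℂ f u).restrictScalars ℝ)) u :=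
    L.hasFDerivAt.comp u (hf.hasFDerivAt.restrictScalars ℝ)
  simp [pR, pC, h.fderiv]

lemma pR_congr {Ω : Set (Fin 2 → ℂ)} (hΩ : IsOpen Ω) {f g : (Fin 2 → ℂ) → ℝ}
    (h : Set.EqOn f g Ω) (a : Fin 2) : Set.EqOn (pR a f) (pR a g) Ω := by
  intro u hu
  simp only [pR, (h.eventuallyEq_of_mem (hΩ.mem_nhds hu)).fderiv_eq]

/-- The imaginary part of a holomorphic solution of the focusing MKdV equation over ℂ
satisfies the defocusing gauged MKdV equation. -/
theorem gauged_mkdv_imaginary_part (c : ℝ) (Ω : Set (Fin 2 → ℂ)) (hΩ : IsOpen Ω)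
    (ψ : (Fin 2 → ℂ) → ℂ) (hψ : DifferentiableOn ℂ ψ Ω)
    (hmkdv : ∀ u ∈ Ω,
      (pC 0 ψ u - (c : ℂ) * pC 1 ψ u) + (1 / 8) * (pC 1 ψ u) ^ 3
        + (1 / 4) * pC 1 (pC 1 (pC 1 ψ)) u = 0) :
    let ψr : (Fin 2 → ℂ) → ℝ := fun u => (ψ u).re
    let ψi : (Fin 2 → ℂ) → ℝ := fun u => (ψ u).im
    ∀ u ∈ Ω,
      (pR 0 ψi u - (c - (3 / 8) * (pR 1 ψr u) ^ 2) * pR 1 ψi u)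
          - (1 / 8) * (pR 1 ψi u) ^ 3 + (1 / 4) * pR 1 (pR 1 (pR 1 ψi)) u = 0 := by
  intro ψr ψi u hu
  have hre : ∀ {f : (Fin 2 → ℂ) → ℂ}, DifferentiableOn ℂ f Ω → ∀ a,
      Set.EqOn (pR a fun x => (f x).re) (fun x => (pC a f x).re) Ω := fun hf a x hx =>
    pR_comp_clm Complex.reCLM (hf.differentiableAt (hΩ.mem_nhds hx)) a
  have him : ∀ {f : (Fin 2 → ℂ) → ℂ}, DifferentiableOn ℂ f Ω → ∀ a,
      Set.EqOn (pR a fun x => (f x).im) (fun x => (pC a f x).im) Ω := fun hf a x hx =>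
    pR_comp_clm Complex.imCLM (hf.differentiableAt (hΩ.mem_nhds hx)) a
  have d1 := differentiableOn_pC hΩ hψ 1
  have d2 := differentiableOn_pC hΩ d1 1
  have e2 := (pR_congr hΩ (him hψ 1) 1).trans (him d1 1)
  have e3 : pR 1 (pR 1 (pR 1 ψi)) u = (pC 1 (pC 1 (pC 1 ψ)) u).im :=
    ((pR_congr hΩ e2 1).trans (him d2 1)) hu
  have a0 : pR 0 ψi u = (pC 0 ψ u).im := him hψ 0 hu
  have a1 : pR 1 ψi u = (pC 1 ψ u).im := him hψ 1 hu
  have b1 : pR 1 ψr u = (pC 1 ψ u).re := hre hψ 1 hu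
  rw [e3, a0, a1, b1]
  have key := hmkdv u hu
  generalize pC 1 (pC 1 (pC 1 ψ)) u = w at key ⊢
  generalize pC 0 ψ u = q at key ⊢
  generalize pC 1 ψ u = p at key ⊢
  have e8 : (1 / 8 : ℂ) = ((1 / 8 : ℝ) : ℂ) := by norm_num
  have e4 : (1 / 4 : ℂ) = ((1 / 4 : ℝ) : ℂ) := by norm_num
  rw [e8, e4] at key
  have h := congrArg Complex.im key
  simp only [Complex.add_im, Complex.sub_im, Complex.ofReal_re, Complex.ofReal_im, pow_succ, pow_zero, one_mul,
    Complex.mul_im, Complex.mul_re, Complex.zero_im] at h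
  linear_combination h
end

section
/- Let c ∈ ℝ, let Ω ⊆ ℂ² be open, and let ψ : Ω → ℂ be holomorphic satisfying the focusing MKdV equation over ℂ with real parameter c on all of Ω. Assume moreover that there is a constant κ ∈ ℝ with ∂_{u₂ᵣ}ψᵢ = κ at every point of Ω. Then ψᵣ satisfies the ungauged focusing MKdV equation (∂_{u₁ᵣ} − (c + (3/8)κ²)·∂_{u₂ᵣ})ψᵣ + (1/8)(∂_{u₂ᵣ}ψᵣ)³ + (1/4)∂_{u₂ᵣ}³ψᵣ = 0 at every point of Ω. -/
theorem pR_re_eq {f : (Fin 2 → ℂ) → ℂ} {u : Fin 2 → ℂ} (hf : DifferentiableAt ℂ f u) (a : Fin 2) :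
    pR a (fun v => (f v).re) u = (pC a f u).re := by
  have h := Complex.reCLM.hasFDerivAt.comp u (hf.hasFDerivAt.restrictScalars ℝ)
  exact congrArg (fun L => L (Pi.single a (1 : ℂ))) h.fderiv

theorem pR_im_eq {f : (Fin 2 → ℂ) → ℂ} {u : Fin 2 → ℂ} (hf : DifferentiableAt ℂ f u) (a : Fin 2) :
    pR a (fun v => (f v).im) u = (pC a f u).im := by
  have h := Complex.imCLM.hasFDerivAt.comp u (hf.hasFDerivAt.restrictScalars ℝ)
  exact congrArg (fun L => L (Pi.single a (1 : ℂ))) h.fderiv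

/-- Cauchy–Riemann: a holomorphic function with locally constant imaginary part has zero
derivative. -/
theorem deriv_eq_zero_of_im_const {h : ℂ → ℂ} {z : ℂ} {κ : ℝ} (hd : DifferentiableAt ℂ h z)
    (him : ∀ᶠ w in nhds z, (h w).im = κ) : deriv h z = 0 := by
  have h1 := Complex.imCLM.hasFDerivAt.comp z
    (hd.hasDerivAt.hasFDerivAt.restrictScalars ℝ)
  have h2 : HasFDerivAt (Complex.imCLM ∘ h) (0 : ℂ →L[ℝ] ℝ) z :=
    (hasFDerivAt_const κ z).congr_of_eventuallyEq him
  have h3 := h1.unique h2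
  have e1 := congrArg (fun L => L (1 : ℂ)) h3
  have eI := congrArg (fun L => L Complex.I) h3
  simp at e1 eI
  exact Complex.ext eI e1

theorem hasDerivAt_line (u e : Fin 2 → ℂ) (z : ℂ) :
    HasDerivAt (fun z : ℂ => u + z • e) e z := by
  simpa using ((hasDerivAt_id z).smul_const e).const_add u

/-- Along the complex line through `u` in the `u₂`-direction, `∂₂ψ` has derivative zero. -/
theorem hasDerivAt_slice {Ω : Set (Fin 2 → ℂ)} (hΩ : IsOpen Ω)
    {ψ : (Fin 2 → ℂ) → ℂ} (hψ : DifferentiableOn ℂ ψ Ω) {κ : ℝ}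
    (hκ : ∀ u ∈ Ω, (pC 1 ψ u).im = κ) {u : Fin 2 → ℂ} (hu : u ∈ Ω) :
    HasDerivAt (fun z : ℂ => pC 1 ψ (u + z • (Pi.single 1 1 : Fin 2 → ℂ))) 0 0 := by
  set e : Fin 2 → ℂ := Pi.single 1 1 with he
  have hcont : Continuous (fun z : ℂ => u + z • e) := by fun_prop
  set V : Set ℂ := (fun z : ℂ => u + z • e) ⁻¹' Ω with hV
  have hVo : IsOpen V := hΩ.preimage hcont
  have h0 : (0 : ℂ) ∈ V := by simpa [hV] using hu
  have hg : ∀ z ∈ V, HasDerivAt (fun z : ℂ => ψ (u + z • e)) (pC 1 ψ (u + z • e)) z := by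
    intro z hz
    exact ((hψ.differentiableAt (hΩ.mem_nhds hz)).hasFDerivAt).comp_hasDerivAt z
      (hasDerivAt_line u e z)
  have hgd : DifferentiableOn ℂ (fun z : ℂ => ψ (u + z • e)) V :=
    fun z hz => (hg z hz).differentiableAt.differentiableWithinAt
  have hEq : (fun z : ℂ => pC 1 ψ (u + z • e)) =ᶠ[nhds 0] deriv (fun z : ℂ => ψ (u + z • e)) := by
    filter_upwards [hVo.mem_nhds h0] with z hz using (hg z hz).deriv.symm
  have hd : DifferentiableAt ℂ (fun z : ℂ => pC 1 ψ (u + z • e)) 0 :=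
    ((hgd.deriv hVo).differentiableAt (hVo.mem_nhds h0)).congr_of_eventuallyEq hEq
  have hz : deriv (fun z : ℂ => pC 1 ψ (u + z • e)) 0 = 0 := by
    refine deriv_eq_zero_of_im_const (κ := κ) hd ?_
    filter_upwards [hVo.mem_nhds h0] with z hz using hκ _ hz
  simpa only [hz] using hd.hasDerivAt

theorem pC_pC_eq_zero {Ω : Set (Fin 2 → ℂ)} (hΩ : IsOpen Ω)
    {ψ : (Fin 2 → ℂ) → ℂ} (hψ : DifferentiableOn ℂ ψ Ω) {κ : ℝ}
    (hκ : ∀ u ∈ Ω, (pC 1 ψ u).im = κ) {u : Fin 2 → ℂ} (hu : u ∈ Ω) :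
    pC 1 (pC 1 ψ) u = 0 := by
  by_cases hd : DifferentiableAt ℂ (pC 1 ψ) u
  · have hd' : HasFDerivAt (pC 1 ψ) (fderiv ℂ (pC 1 ψ) u)
        (u + (0 : ℂ) • (Pi.single 1 1 : Fin 2 → ℂ)) := by simpa using hd.hasFDerivAt
    have h1 := hd'.comp_hasDerivAt (0 : ℂ) (hasDerivAt_line u _ 0)
    exact h1.unique
      (hasDerivAt_slice hΩ hψ hκ hu)
  · simp [pC, fderiv_zero_of_not_differentiableAt hd]

theorem pR_pR_re_eq_zero {Ω : Set (Fin 2 → ℂ)} (hΩ : IsOpen Ω)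
    {ψ : (Fin 2 → ℂ) → ℂ} (hψ : DifferentiableOn ℂ ψ Ω) {κ : ℝ}
    (hκ : ∀ u ∈ Ω, (pC 1 ψ u).im = κ) {u : Fin 2 → ℂ} (hu : u ∈ Ω) :
    pR 1 (pR 1 (fun v => (ψ v).re)) u = 0 := by
  have hEq : pR 1 (fun v => (ψ v).re) =ᶠ[nhds u] fun v => (pC 1 ψ v).re := by
    filter_upwards [hΩ.mem_nhds hu] with v hv
    exact pR_re_eq (hψ.differentiableAt (hΩ.mem_nhds hv)) 1
  have hfd : pR 1 (pR 1 (fun v => (ψ v).re)) u = pR 1 (fun v => (pC 1 ψ v).re) u :=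
    congrArg (fun L : (Fin 2 → ℂ) →L[ℝ] ℝ => L (Pi.single 1 (1 : ℂ))) hEq.fderiv_eq
  rw [hfd]
  by_cases hd : DifferentiableAt ℝ (fun v => (pC 1 ψ v).re) u
  -- The real `u₂ᵣ`-line sits in the complex line of `hasDerivAt_slice`.
  · have hline : HasDerivAt (fun t : ℝ => u + (t : ℂ) • (Pi.single 1 1 : Fin 2 → ℂ))
        (Pi.single 1 1) 0 := by
      have := (hasDerivAt_line u (Pi.single 1 1) ((0 : ℝ) : ℂ)).scomp (0 : ℝ)
        (Complex.ofRealCLM.hasDerivAt (x := 0))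
      simpa [Function.comp_def] using this
    have hd' : HasFDerivAt (fun v => (pC 1 ψ v).re) (fderiv ℝ (fun v => (pC 1 ψ v).re) u)
        (u + ((0 : ℝ) : ℂ) • (Pi.single 1 1 : Fin 2 → ℂ)) := by simpa using hd.hasFDerivAt
    have h1 := hd'.comp_hasDerivAt (0 : ℝ) hline
    have h2 := HasDerivAt.real_of_complex (z := 0)
      (by simpa using hasDerivAt_slice hΩ hψ hκ hu)
    exact h1.unique h2
  · simp [pR, fderiv_zero_of_not_differentiableAt hd]


/-- When the gauge field `∂_{u₂ᵣ}ψᵢ` is a real constant `κ`, the real part of a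
holomorphic solution of the focusing MKdV equation over ℂ satisfies the ungauged
focusing MKdV equation. -/
theorem gauged_mkdv_constant_gauge (c : ℝ) (Ω : Set (Fin 2 → ℂ)) (hΩ : IsOpen Ω)
    (ψ : (Fin 2 → ℂ) → ℂ) (hψ : DifferentiableOn ℂ ψ Ω)
    (hmkdv : ∀ u ∈ Ω,
      (pC 0 ψ u - (c : ℂ) * pC 1 ψ u) + (1 / 8) * (pC 1 ψ u) ^ 3
        + (1 / 4) * pC 1 (pC 1 (pC 1 ψ)) u = 0)
    (κ : ℝ)
    (hκ : ∀ u ∈ Ω, pR 1 (fun v => (ψ v).im) u = κ) :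
    let ψr : (Fin 2 → ℂ) → ℝ := fun u => (ψ u).re
    ∀ u ∈ Ω,
      (pR 0 ψr u - (c + (3 / 8) * κ ^ 2) * pR 1 ψr u)
          + (1 / 8) * (pR 1 ψr u) ^ 3 + (1 / 4) * pR 1 (pR 1 (pR 1 ψr)) u = 0 := by
  intro ψr u hu
  have hdiff : ∀ v ∈ Ω, DifferentiableAt ℂ ψ v := fun v hv =>
    hψ.differentiableAt (hΩ.mem_nhds hv)
  have hκ' : ∀ v ∈ Ω, (pC 1 ψ v).im = κ := fun v hv => by
    rw [← pR_im_eq (hdiff v hv), hκ v hv]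
  have hC : pC 1 (pC 1 (pC 1 ψ)) u = 0 := by
    have h : pC 1 (pC 1 ψ) =ᶠ[nhds u] fun _ => 0 := by
      filter_upwards [hΩ.mem_nhds hu] with v hv using pC_pC_eq_zero hΩ hψ hκ' hv
    unfold pC at h ⊢
    rw [h.fderiv_eq]
    simp
  have hR : pR 1 (pR 1 (pR 1 ψr)) u = 0 := by
    have h : pR 1 (pR 1 ψr) =ᶠ[nhds u] fun _ => 0 := by
      filter_upwards [hΩ.mem_nhds hu] with v hv using pR_pR_re_eq_zero hΩ hψ hκ' hv
    unfold pR at h ⊢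
    rw [h.fderiv_eq]
    simp
  have h0 : pR 0 ψr u = (pC 0 ψ u).re := pR_re_eq (hdiff u hu) 0
  have h1 : pR 1 ψr u = (pC 1 ψ u).re := pR_re_eq (hdiff u hu) 1
  have hcomplex : pC 1 ψ u = ((pC 1 ψ u).re : ℂ) + (κ : ℂ) * Complex.I := by
    rw [← hκ' u hu, Complex.re_add_im]
  have hm := hmkdv u hu
  rw [hC] at hm
  rw [hR, h0, h1]
  generalize pC 0 ψ u = p at hm ⊢
  generalize (pC 1 ψ u).re = a at hcomplex ⊢
  rw [hcomplex] at hm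
  have hcube : ((a : ℂ) + κ * Complex.I) ^ 3
      = ((a ^ 3 - 3 * a * κ ^ 2 : ℝ) : ℂ) + ((3 * a ^ 2 * κ - κ ^ 3 : ℝ) : ℂ) * Complex.I := by
    push_cast
    linear_combination (3 * (a : ℂ) * κ ^ 2 + κ ^ 3 * Complex.I) * Complex.I_sq
  have hc8 : (1 / 8 : ℂ) = ((1 / 8 : ℝ) : ℂ) := by push_cast; rfl
  rw [hcube, hc8] at hm
  have hre := congrArg Complex.re hm
  simp only [Complex.add_re, Complex.sub_re, Complex.re_ofReal_mul, Complex.ofReal_re,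
    Complex.I_re, mul_zero, Complex.zero_re, add_zero] at hre
  linarith
end

section
/- Let g ≥ 1, let φ₁,…,φ_g be real numbers and let K₁,…,K_g be nonzero complex numbers. Then the determinant of the g×g matrix ℒ satisfies det ℒ = ∏_{1≤i<j≤g} sin(φ_j − φ_i) / ((2√−1)^{g(g−1)/2}·K₁·K₂⋯K_g). -/
/-!
With `v j = 2√−1 sin φ_j` and `w j = e^{−√−1 φ_j}`, the `j`-th column of `ℒ` is
`1 / ((2√−1)^{g−1} K_j)` times the vector `(v j ^ i * w j ^ (g−1−i))_i`. Hence `ℒ` is a column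
scaling of a transposed projective Vandermonde matrix, whose determinant is
`∏_{i<j} (v j * w i − v i * w j)`. Each factor equals `2√−1 sin(φ_j − φ_i)`. The `g(g−1)/2`
factors `2√−1` obtained this way cancel half of the `(2√−1)^{g(g−1)}` coming from the scaling.
-/

open Complex

/-- The matrix `ℒ` expressing the holomorphic one-forms in the angle coordinates. -/
noncomputable def Lmat (g : ℕ) (φ : Fin g → ℝ) (K : Fin g → ℂ) :
    Matrix (Fin g) (Fin g) ℂ :=
  Matrix.of fun i j =>
    Complex.exp (-(((g : ℂ) - 1 - (i : ℕ)) * I * (φ j : ℂ))) *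
        (2 * I * Complex.sin ((φ j : ℂ))) ^ (i : ℕ) /
      ((2 * I) ^ (g - 1) * K j)

/-- The homogeneous difference in the projective Vandermonde determinant at the points
`[2√−1 sin x : e^{−√−1 x}]` and `[2√−1 sin y : e^{−√−1 y}]`. -/
lemma vandermonde_factor (x y : ℂ) :
    2 * I * sin y * exp (-(I * x)) - 2 * I * sin x * exp (-(I * y)) = 2 * I * sin (y - x) := by
  have h : ∀ z : ℂ, exp (-(I * z)) = cos z - sin z * I := fun z => by
    rw [show -(I * z) = (-z) * I by ring, exp_mul_I, cos_neg, sin_neg]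
    ring
  rw [h, h, sin_sub]
  ring

lemma sum_card_Ioi (g : ℕ) : ∑ i : Fin g, (Finset.Ioi i).card = g * (g - 1) / 2 := by
  simp only [Fin.card_Ioi]
  rw [Fin.sum_univ_eq_sum_range (fun i => g - 1 - i) g, Finset.sum_range_reflect (fun i => i) g,
    Finset.sum_range_id]

/-- `det ℒ = ∏_{i<j} sin(φ_j − φ_i) / ((2√−1)^{g(g−1)/2} K₁⋯K_g)`. -/
theorem det_Lmat (g : ℕ) (hg : 1 ≤ g) (φ : Fin g → ℝ) (K : Fin g → ℂ)
    (hK : ∀ j, K j ≠ 0) :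
    (Lmat g φ K).det =
      (∏ i : Fin g, ∏ j ∈ Finset.Ioi i, Complex.sin ((φ j : ℂ) - (φ i : ℂ))) /
        ((2 * I) ^ (g * (g - 1) / 2) * ∏ j, K j) := by
  have hL : Lmat g φ K = Matrix.of fun i j => ((2 * I) ^ (g - 1) * K j)⁻¹ *
      (Matrix.projVandermonde (fun j => 2 * I * sin (φ j : ℂ))
        (fun j => exp (-(I * (φ j : ℂ))))).transpose i j := by
    ext i j
    have hrev : ((i.rev : ℕ) : ℂ) = (g : ℂ) - 1 - (i : ℕ) := by
      rw [Fin.val_rev, Nat.cast_sub (by omega)]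
      push_cast
      ring
    simp only [Lmat, Matrix.of_apply, Matrix.transpose_apply, Matrix.projVandermonde_apply]
    rw [← exp_nat_mul, hrev, div_eq_inv_mul]
    ring_nf
  have h2 : (2 * I : ℂ) ≠ 0 := by simp
  -- The scaling contributes `(2√−1)^{g(g−1)}`, twice the exponent left in the end.
  have hexp : (g - 1) * g = g * (g - 1) / 2 + g * (g - 1) / 2 := by
    have := Nat.even_mul_pred_self g
    obtain ⟨k, hk⟩ := this
    rw [mul_comm (g - 1) g]
    omega
  rw [hL, Matrix.det_mul_row, Matrix.det_transpose, Matrix.det_projVandermonde]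
  simp only [vandermonde_factor]
  -- Keep `2√−1` atomic, so that its powers are not split into powers of `2` and `√−1`.
  clear hL
  generalize (2 * I : ℂ) = c at h2 ⊢
  simp only [Finset.prod_mul_distrib, Finset.prod_const,
    Finset.prod_pow_eq_pow_sum, sum_card_Ioi, Finset.prod_inv_distrib, Finset.card_univ,
    Fintype.card_fin]
  have hP : ∏ j, K j ≠ 0 := Finset.prod_ne_zero_iff.mpr fun j _ => hK j
  rw [← pow_mul, hexp, pow_add]
  field_simp
end

section
/- Let g ≥ 1, let φ₁,…,φ_g be real numbers and let K₁,…,K_g be nonzero complex numbers. Then ℳ·ℒ is the diagonal matrix whose j-th diagonal entry is ∏_{i≠j} sin(φ_j − φ_i) / K_j. Consequently, if in addition sin(φ_i − φ_j) ≠ 0 for all i ≠ j, then ℒ is invertible and ℒ⁻¹ = 𝒦·ℳ, where 𝒦 is the diagonal matrix with j-th diagonal entry K_j / ∏_{i≠j} sin(φ_j − φ_i). -/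
/-!
The sum defining the `(j, l)` entry of `ℳ·ℒ` is, up to the factor `(2√−1)^{g−1} K_l`, the
homogenization of `P_j(ζ) = ∏_{i≠j}(e^{−√−1 φ_i} ζ − 2√−1 sin φ_i)` in degree `g − 1`, that is
`e^{−(g−1)√−1 φ_l} P_j(ζ_l)` with `ζ_l = 2√−1 sin φ_l · e^{√−1 φ_l}`. Distributing one factor
`e^{−√−1 φ_l}` to each of the `g − 1` linear factors turns the `i`-th one into
`2√−1 (e^{−√−1 φ_i} sin φ_l − e^{−√−1 φ_l} sin φ_i) = 2√−1 sin (φ_l − φ_i)`. For `l ≠ j` the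
factor with `i = l` vanishes, so `ℳ·ℒ` is diagonal. When the diagonal entries are nonzero, `𝒦`
is the inverse of this diagonal matrix, hence `𝒦·ℳ` is a left inverse of the square matrix `ℒ`.
-/

open Complex

/-- `ε_{j,k}`, defined by `∏_{i≠j}(e^{−√−1 φ_i} ζ − 2√−1 sin φ_i) = Σ_k ε_{j,k} ζ^k`. -/
noncomputable def epsP (g : ℕ) (φ : Fin g → ℝ) (j : Fin g) (k : ℕ) : ℂ :=
  (∏ i ∈ Finset.univ.erase j,
      (Polynomial.C (Complex.exp (-(I * (φ i : ℂ)))) * Polynomial.X -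
        Polynomial.C (2 * I * Complex.sin ((φ i : ℂ))))).coeff k

/-- The matrix `ℳ` with `(ℳ)_{j,k} = ε_{j,k−1}`. -/
noncomputable def Mmat (g : ℕ) (φ : Fin g → ℝ) : Matrix (Fin g) (Fin g) ℂ :=
  Matrix.of fun j k => epsP g φ j (k : ℕ)

/-- A single linear factor of `∏_{i≠j}(e^{−√−1 φ_i} ζ − 2√−1 sin φ_i)`, evaluated at
`ζ = 2√−1 sin a · e^{√−1 a}` and multiplied by `e^{−√−1 a}`. -/
lemma exp_mul_factor (a b : ℂ) :
    exp (-(I * a)) * (exp (-(I * b)) * (2 * I * sin a * exp (I * a)) - 2 * I * sin b) =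
      2 * I * sin (a - b) := by
  have h : exp (-(I * a)) * exp (I * a) = 1 := by rw [← exp_add]; simp
  have hc (x : ℂ) : exp (-(I * x)) = cos x - sin x * I := by
    rw [show -(I * x) = (-x) * I by ring, exp_mul_I, cos_neg, sin_neg]; ring
  calc _ = 2 * I * (exp (-(I * b)) * sin a * (exp (-(I * a)) * exp (I * a))
            - exp (-(I * a)) * sin b) := by ring
    _ = _ := by rw [h, hc, hc, sin_sub]; ring

/-- The coefficients `ε_{j,k}` for `k < g` are all the coefficients of the defining polynomial. -/
lemma sum_epsP_mul_pow (g : ℕ) (φ : Fin g → ℝ) (j : Fin g) (z : ℂ) :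
    ∑ k : Fin g, epsP g φ j k * z ^ (k : ℕ) =
      ∏ i ∈ Finset.univ.erase j, (exp (-(I * (φ i : ℂ))) * z - 2 * I * sin (φ i : ℂ)) := by
  set P : Polynomial ℂ := ∏ i ∈ Finset.univ.erase j,
      (Polynomial.C (exp (-(I * (φ i : ℂ)))) * Polynomial.X -
        Polynomial.C (2 * I * sin ((φ i : ℂ)))) with hP
  have hdeg : P.natDegree < g := by
    have h1 : P.natDegree ≤ ∑ i ∈ Finset.univ.erase j, 1 := by
      refine (Polynomial.natDegree_prod_le _ _).trans (Finset.sum_le_sum fun i _ => ?_)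
      rw [Polynomial.natDegree_sub_C]
      exact (Polynomial.natDegree_C_mul_le _ _).trans Polynomial.natDegree_X_le
    have h2 : ∑ i ∈ Finset.univ.erase j, 1 = g - 1 := by simp
    have := j.pos
    omega
  have heval := Polynomial.eval_eq_sum_range' hdeg z
  rw [Finset.sum_range] at heval
  change ∑ k : Fin g, P.coeff k * z ^ (k : ℕ) = _
  rw [← heval, hP, Polynomial.eval_prod]
  simp

/-- The entries of `ℳ·ℒ`, before using that the off-diagonal products contain `sin 0`. -/
lemma Mmat_mul_Lmat_apply (g : ℕ) (φ : Fin g → ℝ) (K : Fin g → ℂ) (j l : Fin g) :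
    (Mmat g φ * Lmat g φ K) j l =
      (∏ i ∈ Finset.univ.erase j, sin ((φ l : ℂ) - (φ i : ℂ))) / K l := by
  have hcard : (Finset.univ.erase j).card = g - 1 := by simp
  have hg : ((g - 1 : ℕ) : ℂ) = (g : ℂ) - 1 := Nat.cast_pred j.pos
  have hterm (k : Fin g) : Mmat g φ j k * Lmat g φ K k l =
      (epsP g φ j k * (2 * I * sin (φ l : ℂ) * exp (I * (φ l : ℂ))) ^ (k : ℕ)) *
        (exp (-(I * (φ l : ℂ))) ^ (g - 1) / ((2 * I) ^ (g - 1) * K l)) := by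
    have he : exp (-(((g : ℂ) - 1 - (k : ℕ)) * I * (φ l : ℂ))) =
        exp (I * (φ l : ℂ)) ^ (k : ℕ) * exp (-(I * (φ l : ℂ))) ^ (g - 1) := by
      rw [← exp_nat_mul, ← exp_nat_mul, ← exp_add, hg]
      congr 1
      ring
    simp only [Mmat, Lmat, Matrix.of_apply, he, mul_pow _ (exp _)]
    ring
  have h2 : ((2 * I) ^ (g - 1) : ℂ) ≠ 0 := by simp
  rw [Matrix.mul_apply, Finset.sum_congr rfl fun k _ => hterm k, ← Finset.sum_mul,
    sum_epsP_mul_pow, ← mul_div_assoc, mul_comm (∏ i ∈ _, _), ← hcard, ← Finset.prod_const,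
    ← Finset.prod_mul_distrib, Finset.prod_congr rfl fun i _ => exp_mul_factor (φ l) (φ i),
    Finset.prod_mul_distrib, Finset.prod_const, hcard, mul_div_mul_left _ _ h2]

/-- `ℳ·ℒ` is diagonal with entries `∏_{i≠j} sin(φ_j − φ_i)/K_j`; consequently, when
`sin(φ_i − φ_j) ≠ 0` for `i ≠ j`, `ℒ` is invertible with `ℒ⁻¹ = 𝒦·ℳ`. -/
theorem Mmat_mul_Lmat (g : ℕ) (hg : 1 ≤ g) (φ : Fin g → ℝ) (K : Fin g → ℂ)
    (hK : ∀ j, K j ≠ 0) :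
    Mmat g φ * Lmat g φ K =
      Matrix.diagonal (fun j =>
        (∏ i ∈ Finset.univ.erase j, Complex.sin ((φ j : ℂ) - (φ i : ℂ))) / K j) ∧
    ((∀ i j : Fin g, i ≠ j → Complex.sin ((φ i : ℂ) - (φ j : ℂ)) ≠ 0) →
      IsUnit (Lmat g φ K) ∧
      (Lmat g φ K)⁻¹ =
        Matrix.diagonal (fun j =>
            K j / ∏ i ∈ Finset.univ.erase j, Complex.sin ((φ j : ℂ) - (φ i : ℂ))) *
          Mmat g φ) := by
  have hmul : Mmat g φ * Lmat g φ K = Matrix.diagonal (fun j =>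
      (∏ i ∈ Finset.univ.erase j, sin ((φ j : ℂ) - (φ i : ℂ))) / K j) := by
    ext j l
    rw [Mmat_mul_Lmat_apply]
    by_cases h : j = l
    · subst h
      rw [Matrix.diagonal_apply_eq]
    · rw [Matrix.diagonal_apply_ne _ h,
        Finset.prod_eq_zero (Finset.mem_erase.2 ⟨Ne.symm h, Finset.mem_univ l⟩) (by simp),
        zero_div]
  refine ⟨hmul, fun hs => ?_⟩
  have hleft : Matrix.diagonal (fun j =>
      K j / ∏ i ∈ Finset.univ.erase j, sin ((φ j : ℂ) - (φ i : ℂ))) * Mmat g φ *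
        Lmat g φ K = 1 := by
    rw [Matrix.mul_assoc, hmul, Matrix.diagonal_mul_diagonal, ← Matrix.diagonal_one]
    congr 1
    funext j
    have hp : ∏ i ∈ Finset.univ.erase j, sin ((φ j : ℂ) - (φ i : ℂ)) ≠ 0 :=
      Finset.prod_ne_zero_iff.2 fun i hi => hs j i (Finset.ne_of_mem_erase hi).symm
    have := hK j
    field_simp
  exact ⟨IsUnit.of_mul_eq_one_right _ hleft, Matrix.inv_eq_left_inv hleft⟩
end

section
/- Fix an integer n ≥ 2 and complex numbers s₁,…,sₙ, c₁,…,cₙ. Then M̃·W is the diagonal matrix whose j-th diagonal entry is 2^{n−1}·∏_{i≠j} (s_j·c_i − s_i·c_j); that is, (M̃·W)_{j,k} = 0 for j ≠ k and (M̃·W)_{j,j} = 2^{n−1}·∏_{i≠j} (s_j·c_i − s_i·c_j). -/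
/-!
Each row of `M̃` lists the coefficients of a product of `n - 1` linear factors `a i * x - b i`, and
each column of `W` lists the monomials `u ^ (n - 1 - k) * v ^ k`. An entry of `M̃ * W` is therefore
the homogenization of that product, evaluated at `(v, u)`, and homogenization is multiplicative, so
the entry equals `∏ (a i * v - b i * u)` (`sum_coeff_prod_linear`). With `a i = c i - s i`,
`b i = 2 * s i`, `u = c k - s k`, `v = 2 * s k`, each factor is `2 * (s k * c i - s i * c k)`, and
off the diagonal the factor `i = k` is present and vanishes.
-/

/-- `ε_{j,k}`, defined by `∏_{i≠j}((c_i − s_i)x − 2s_i) = Σ_k ε_{j,k} x^k`. -/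
noncomputable def epsW (n : ℕ) (s c : Fin n → ℂ) (j : Fin n) (k : ℕ) : ℂ :=
  (∏ i ∈ Finset.univ.erase j,
      (Polynomial.C (c i - s i) * Polynomial.X - Polynomial.C (2 * s i))).coeff k

open Polynomial in
theorem natDegree_prod_linear_le {ι : Type*} (T : Finset ι) (a b : ι → ℂ) :
    (∏ i ∈ T, (C (a i) * X - C (b i))).natDegree ≤ T.card := by
  refine (natDegree_prod_le _ _).trans ?_
  rw [Finset.card_eq_sum_ones]
  refine Finset.sum_le_sum fun i _ => ?_
  rw [sub_eq_add_neg, ← C_neg]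
  exact natDegree_linear_le

open Polynomial in
/-- The degree-`m + 1` homogenization of `(a x - b) q` is `a v - b u` times the degree-`m`
homogenization of `q`, both evaluated at `(v, u)`. -/
theorem sum_coeff_linear_mul (a b u v : ℂ) (q : ℂ[X]) (m : ℕ) (hq : q.natDegree ≤ m) :
    ∑ k ∈ Finset.range (m + 2), ((C a * X - C b) * q).coeff k * (u ^ (m + 1 - k) * v ^ k) =
      (a * v - b * u) * ∑ k ∈ Finset.range (m + 1), q.coeff k * (u ^ (m - k) * v ^ k) := by
  have hX : ∑ k ∈ Finset.range (m + 2), (X * q).coeff k * (u ^ (m + 1 - k) * v ^ k) =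
      v * ∑ k ∈ Finset.range (m + 1), q.coeff k * (u ^ (m - k) * v ^ k) := by
    rw [Finset.sum_range_succ', Finset.mul_sum]
    simp only [coeff_X_mul, coeff_X_mul_zero, zero_mul, add_zero, Nat.add_sub_add_right]
    exact Finset.sum_congr rfl fun k _ => by ring
  have h1 : ∑ k ∈ Finset.range (m + 2), q.coeff k * (u ^ (m + 1 - k) * v ^ k) =
      u * ∑ k ∈ Finset.range (m + 1), q.coeff k * (u ^ (m - k) * v ^ k) := by
    rw [Finset.sum_range_succ, coeff_eq_zero_of_natDegree_lt (by omega), zero_mul, add_zero,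
      Finset.mul_sum]
    refine Finset.sum_congr rfl fun k hk => ?_
    rw [Nat.sub_add_comm (Nat.lt_succ_iff.mp (Finset.mem_range.mp hk)), pow_succ]
    ring
  rw [sub_mul (a * v), mul_assoc a, mul_assoc b, ← hX, ← h1, Finset.mul_sum, Finset.mul_sum,
    ← Finset.sum_sub_distrib]
  refine Finset.sum_congr rfl fun k _ => ?_
  rw [sub_mul, mul_assoc, coeff_sub, coeff_C_mul, coeff_C_mul]
  ring

open Polynomial in
/-- The homogenization of a product of linear factors is the product of their homogenizations. -/
theorem sum_coeff_prod_linear {ι : Type*} (T : Finset ι) (a b : ι → ℂ) (u v : ℂ) :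
    ∑ k ∈ Finset.range (T.card + 1),
        (∏ i ∈ T, (C (a i) * X - C (b i))).coeff k * (u ^ (T.card - k) * v ^ k) =
      ∏ i ∈ T, (a i * v - b i * u) := by
  classical
  induction T using Finset.induction_on with
  | empty => simp
  | insert i T hi ih =>
    rw [Finset.card_insert_of_notMem hi, Finset.prod_insert hi, Finset.prod_insert hi,
      sum_coeff_linear_mul _ _ _ _ _ _ (natDegree_prod_linear_le T a b), ih]

/-- `M̃·W` is the diagonal matrix with `j`-th entry `2^{n−1} ∏_{i≠j}(s_j c_i − s_i c_j)`. -/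
theorem Mtilde_mul_W (n : ℕ) (hn : 2 ≤ n) (s c : Fin n → ℂ) :
    (Matrix.of fun j k : Fin n => epsW n s c j (k : ℕ)) *
        (Matrix.of fun i j : Fin n =>
          (c j - s j) ^ (n - 1 - (i : ℕ)) * (2 * s j) ^ (i : ℕ)) =
      Matrix.diagonal (fun j =>
        2 ^ (n - 1) * ∏ i ∈ Finset.univ.erase j, (s j * c i - s i * c j)) := by
  have hc : ∀ j : Fin n, (Finset.univ.erase j).card = n - 1 := fun j => by simp
  ext j k
  have key := sum_coeff_prod_linear (Finset.univ.erase j) (fun i => c i - s i)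
    (fun i => 2 * s i) (c k - s k) (2 * s k)
  rw [hc, Nat.sub_add_cancel (by omega)] at key
  rw [Matrix.mul_apply]
  refine (Fin.sum_univ_eq_sum_range (fun l =>
    epsW n s c j l * ((c k - s k) ^ (n - 1 - l) * (2 * s k) ^ l)) n).trans (key.trans ?_)
  by_cases hjk : j = k
  · subst hjk
    rw [Matrix.diagonal_apply_eq, ← hc j, ← Finset.prod_const, ← Finset.prod_mul_distrib]
    exact Finset.prod_congr rfl fun i _ => by ring
  · rw [Matrix.diagonal_apply_ne _ hjk]
    exact Finset.prod_eq_zero (Finset.mem_erase.mpr ⟨Ne.symm hjk, Finset.mem_univ k⟩) (by ring)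
end

section
/- Fix an integer n ≥ 2 and an index j ∈ {1,…,n}, and work with complex numbers (or commuting indeterminates) s_i, c_i for i ∈ {1,…,n}\{j}. For 0 ≤ ℓ ≤ n−1 define the multilinear symmetric polynomial 𝔪_{j,ℓ} := Σ_{I ⊆ {1,…,n}\{j}, |I| = ℓ} (∏_{i∈I} c_i)·(∏_{i∈{1,…,n}\({j}∪I)} s_i). Then for every k with 0 ≤ k ≤ n−1: ε_{j,k} = 2^{n−1−k}·Σ_{ℓ=0}^{k} (−1)^{n−1−ℓ}·C(n−1−ℓ, k−ℓ)·𝔪_{j,ℓ}, where C(m,r) denotes the binomial coefficient. -/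
section ShiftedExpansion

open Polynomial

/-- The contribution of an `ℓ`-element subset of an `m`-element index set, with `a` and `b` the
products of the `c_i` over the subset and of the `s_i` over its complement. -/
lemma coeff_subset_term (m ℓ k : ℕ) (hℓ : ℓ ≤ k) (hk : k ≤ m) (a b : ℂ) :
    (C a * X ^ ℓ * ((-(X + C 2)) ^ (m - ℓ) * C b)).coeff k =
      2 ^ (m - k) * ((-1) ^ (m - ℓ) * (Nat.choose (m - ℓ) (k - ℓ) : ℂ) * (a * b)) := by
  have h : (C a * X ^ ℓ * ((-(X + C 2)) ^ (m - ℓ) * C b) : ℂ[X]) =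
      C (a * b * (-1) ^ (m - ℓ)) * ((X + C 2) ^ (m - ℓ) * X ^ ℓ) := by
    rw [neg_pow (X + C 2 : ℂ[X])]
    simp only [C_mul, C_pow, C_neg, C_1]
    ring
  rw [h, coeff_C_mul, coeff_mul_X_pow', if_pos hℓ, coeff_X_add_C_pow,
    show m - ℓ - (k - ℓ) = m - k by omega]
  ring

lemma coeff_subset_term_eq_zero (m ℓ k : ℕ) (hℓ : k < ℓ) (a b : ℂ) :
    (C a * X ^ ℓ * ((-(X + C 2)) ^ (m - ℓ) * C b)).coeff k = 0 := by
  rw [mul_right_comm, coeff_mul_X_pow', if_neg (by omega)]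

/-- Expansion of the product over an arbitrary finite index set `A`. -/
lemma coeff_prod_shifted {ι : Type*} [DecidableEq ι] (A : Finset ι) (s c : ι → ℂ) (k : ℕ)
    (hk : k ≤ A.card) :
    (∏ i ∈ A, (C (c i - s i) * X - C (2 * s i))).coeff k =
      2 ^ (A.card - k) *
        ∑ ℓ ∈ Finset.range (k + 1),
          (-1 : ℂ) ^ (A.card - ℓ) * (Nat.choose (A.card - ℓ) (k - ℓ) : ℂ) *
            ∑ I ∈ Finset.powersetCard ℓ A, (∏ i ∈ I, c i) * ∏ i ∈ A \ I, s i := by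
  have hfac : ∀ i ∈ A, (C (c i - s i) * X - C (2 * s i) : ℂ[X]) =
      C (c i) * X + -(X + C 2) * C (s i) := by
    intro i _
    simp only [C_sub, C_mul]
    ring
  have hterm : ∀ ℓ, ∀ I ∈ Finset.powersetCard ℓ A,
      ((∏ i ∈ I, C (c i) * X) * ∏ i ∈ A \ I, -(X + C 2) * C (s i) : ℂ[X]) =
        C (∏ i ∈ I, c i) * X ^ ℓ * ((-(X + C 2)) ^ (A.card - ℓ) * C (∏ i ∈ A \ I, s i)) := by
    intro ℓ I hI
    obtain ⟨hIA, hcard⟩ := Finset.mem_powersetCard.mp hI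
    rw [Finset.prod_mul_distrib, Finset.prod_mul_distrib, Finset.prod_const, Finset.prod_const,
      Finset.card_sdiff_of_subset hIA, hcard, map_prod, map_prod]
  rw [Finset.prod_congr rfl hfac, Finset.prod_add, Finset.sum_powerset, finsetSum_coeff,
    Finset.mul_sum]
  -- Only the subsets of size `ℓ ≤ k` contribute to the coefficient of `X ^ k`.
  rw [← Finset.sum_subset (Finset.range_mono (Nat.succ_le_succ hk))]
  · refine Finset.sum_congr rfl fun ℓ hℓ => ?_
    rw [finsetSum_coeff, Finset.mul_sum, Finset.mul_sum]
    refine Finset.sum_congr rfl fun I hI => ?_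
    rw [hterm ℓ I hI, coeff_subset_term _ _ _ (Nat.lt_succ_iff.mp (Finset.mem_range.mp hℓ)) hk]
  · intro ℓ _ hℓ
    rw [finsetSum_coeff]
    refine Finset.sum_eq_zero fun I hI => ?_
    rw [Finset.mem_range] at hℓ
    rw [hterm ℓ I hI, coeff_subset_term_eq_zero _ _ _ (by omega)]

end ShiftedExpansion

/-- Expression of `ε_{j,k}` through the multilinear symmetric polynomials
`𝔪_{j,ℓ} = Σ_{|I|=ℓ} ∏_{i∈I} c_i ∏_{i∉I} s_i`. -/
theorem eps_eq_shifted_symmetric_combination (n : ℕ) (hn : 2 ≤ n)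
    (s c : Fin n → ℂ) (j : Fin n) (k : ℕ) (hk : k ≤ n - 1) :
    epsW n s c j k =
      2 ^ (n - 1 - k) *
        ∑ ℓ ∈ Finset.range (k + 1),
          (-1 : ℂ) ^ (n - 1 - ℓ) * (Nat.choose (n - 1 - ℓ) (k - ℓ) : ℂ) *
            ∑ I ∈ Finset.powersetCard ℓ (Finset.univ.erase j),
              (∏ i ∈ I, c i) * ∏ i ∈ Finset.univ.erase j \ I, s i := by
  have hcard : (Finset.univ.erase j).card = n - 1 := by simp
  have h := coeff_prod_shifted (Finset.univ.erase j) s c k (by rw [hcard]; exact hk)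
  rw [hcard] at h
  exact h
end

section
/- Fix an integer n ≥ 2 and an index j ∈ {1,…,n}. Regard ε_{j,0},…,ε_{j,n−1} as elements of the multivariate polynomial ring ℂ[s_i, c_i : i ∈ {1,…,n}\{j}] in the 2(n−1) indeterminates s_i, c_i (i ≠ j), defined by ∏_{i≠j}((c_i − s_i)·x − 2·s_i) = Σ_{k=0}^{n−1} ε_{j,k}·x^k. Then the family (ε_{j,0},…,ε_{j,n−1}) is linearly independent over ℂ, and its ℂ-linear span coincides with the ℂ-linear span of the family (𝔪_{j,0},…,𝔪_{j,n−1}), where 𝔪_{j,ℓ} := Σ_{I ⊆ {1,…,n}\{j}, |I| = ℓ} (∏_{i∈I} c_i)·(∏_{i∈{1,…,n}\({j}∪I)} s_i); in particular (𝔪_{j,0},…,𝔪_{j,n−1}) is a basis of that span. -/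
/-!
Since `(c_i − s_i) x − 2 s_i = c_i x − s_i (x + 2)`, expanding the product over `i ≠ j` gives
`∑_k ε_{j,k} x^k = ∑_ℓ 𝔪_{j,ℓ} x^ℓ (−(x + 2))^(n−1−ℓ)`, so that
`ε_{j,k} = ∑_ℓ a_{kℓ} 𝔪_{j,ℓ}` with `a_{kℓ} = [x^k] x^ℓ (−(x + 2))^(n−1−ℓ)`
(`epsMv_eq_sum`). The matrix `(a_{kℓ})` is triangular with nonzero diagonal entries
`(−2)^(n−1−ℓ)`, hence the two spans agree. The `𝔪_{j,ℓ}` are linearly independent because the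
specialization `s_i ↦ 1`, `c_i ↦ x` sends `𝔪_{j,ℓ}` to `binom(n−1, ℓ) x^ℓ`
(`aeval_mMv`). The `ε_{j,k}` are then `n` vectors spanning an `n`-dimensional space.
-/

/-- `ε_{j,k}` as an element of the polynomial ring `ℂ[s_i, c_i : i ≠ j]`:
the variable `(false, i)` is `s_i` and `(true, i)` is `c_i`. -/
noncomputable def epsMv (n : ℕ) (j : Fin n) (k : ℕ) :
    MvPolynomial (Bool × {i : Fin n // i ≠ j}) ℂ :=
  (∏ i : {i : Fin n // i ≠ j},
      (Polynomial.C (MvPolynomial.X (R := ℂ) (true, i) - MvPolynomial.X (false, i)) *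
          Polynomial.X -
        Polynomial.C (2 * MvPolynomial.X (false, i)))).coeff k

/-- The multilinear symmetric polynomial `𝔪_{j,ℓ}`, homogeneous of degree `ℓ` in the
`c`-variables and `n−1−ℓ` in the `s`-variables. -/
noncomputable def mMv (n : ℕ) (j : Fin n) (ℓ : ℕ) :
    MvPolynomial (Bool × {i : Fin n // i ≠ j}) ℂ :=
  ∑ I ∈ Finset.powersetCard ℓ (Finset.univ : Finset {i : Fin n // i ≠ j}),
    (∏ i ∈ I, MvPolynomial.X (R := ℂ) (true, i)) *
      ∏ i ∈ Finset.univ \ I, MvPolynomial.X (false, i)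

/-- The polynomial `x^ℓ (−(x + 2))^(n−1−ℓ)`, which multiplies `𝔪_{j,ℓ}` in the generating
polynomial of the `ε_{j,k}`. -/
noncomputable def transPoly (n ℓ : ℕ) : Polynomial ℂ :=
  Polynomial.X ^ ℓ * (-(Polynomial.X + Polynomial.C 2)) ^ (n - 1 - ℓ)

lemma transPoly_coeff_of_lt (n : ℕ) {k ℓ : ℕ} (h : k < ℓ) : (transPoly n ℓ).coeff k = 0 := by
  rw [transPoly, Polynomial.coeff_X_pow_mul', if_neg (by omega)]

lemma transPoly_coeff_self_ne_zero (n ℓ : ℕ) : (transPoly n ℓ).coeff ℓ ≠ 0 := by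
  rw [transPoly, Polynomial.coeff_X_pow_mul', if_pos le_rfl, Nat.sub_self,
    Polynomial.coeff_zero_eq_eval_zero]
  simp

lemma card_ne (n : ℕ) (j : Fin n) :
    (Finset.univ : Finset {i : Fin n // i ≠ j}).card = n - 1 := by
  simp

/-- The change of basis from the `𝔪_{j,ℓ}` to the `ε_{j,k}`. -/
lemma epsMv_eq_sum (n : ℕ) (j : Fin n) (k : ℕ) :
    epsMv n j k = ∑ ℓ ∈ Finset.range n, (transPoly n ℓ).coeff k • mMv n j ℓ := by
  have hn : 0 < n := j.pos
  have hprod : (∏ i : {i : Fin n // i ≠ j},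
      (Polynomial.C (MvPolynomial.X (R := ℂ) (true, i) - MvPolynomial.X (false, i)) *
          Polynomial.X -
        Polynomial.C (2 * MvPolynomial.X (false, i)))) =
      ∑ ℓ ∈ Finset.range n,
        Polynomial.C (mMv n j ℓ) * (transPoly n ℓ).map MvPolynomial.C := by
    have hfac : ∀ i : {i : Fin n // i ≠ j},
        (Polynomial.C (MvPolynomial.X (R := ℂ) (true, i) - MvPolynomial.X (R := ℂ) (false, i)) *
          Polynomial.X - Polynomial.C (2 * MvPolynomial.X (R := ℂ) (false, i)) :
            Polynomial (MvPolynomial (Bool × {i : Fin n // i ≠ j}) ℂ)) =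
        Polynomial.C (MvPolynomial.X (R := ℂ) (true, i)) * Polynomial.X +
          Polynomial.C (MvPolynomial.X (R := ℂ) (false, i)) * (-(Polynomial.X + Polynomial.C 2)) := by
      intro i
      simp only [map_sub, map_mul]
      ring
    rw [Finset.prod_congr rfl fun i _ => hfac i, Finset.prod_add, Finset.sum_powerset, card_ne,
      Nat.sub_add_cancel hn]
    refine Finset.sum_congr rfl fun ℓ _ => ?_
    rw [mMv, map_sum, Finset.sum_mul]
    refine Finset.sum_congr rfl fun I hI => ?_
    have hc : I.card = ℓ := (Finset.mem_powersetCard.1 hI).2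
    have hc' : (Finset.univ \ I).card = n - 1 - ℓ := by
      rw [Finset.card_sdiff_of_subset (Finset.subset_univ I), card_ne, hc]
    rw [Finset.prod_mul_distrib, Finset.prod_mul_distrib, Finset.prod_const, Finset.prod_const,
      hc, hc', map_mul, map_prod, map_prod, transPoly]
    simp only [Polynomial.map_mul, Polynomial.map_pow, Polynomial.map_neg, Polynomial.map_add,
      Polynomial.map_X, Polynomial.map_ofNat, map_ofNat]
    ring
  rw [epsMv, hprod, Polynomial.finsetSum_coeff]
  refine Finset.sum_congr rfl fun ℓ _ => ?_
  rw [Polynomial.coeff_C_mul, Polynomial.coeff_map, MvPolynomial.smul_eq_C_mul, mul_comm]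

/-- The specialization `s_i ↦ 1`, `c_i ↦ x` turns `𝔪_{j,ℓ}` into a multiple of `x^ℓ`. -/
lemma aeval_mMv (n : ℕ) (j : Fin n) (ℓ : ℕ) :
    MvPolynomial.aeval (fun p : Bool × {i : Fin n // i ≠ j} =>
      if p.1 then (Polynomial.X : Polynomial ℂ) else 1) (mMv n j ℓ) =
      Polynomial.monomial ℓ ((n - 1).choose ℓ : ℂ) := by
  rw [mMv, map_sum, Finset.sum_congr rfl (g := fun _ => (Polynomial.X : Polynomial ℂ) ^ ℓ),
    Finset.sum_const, Finset.card_powersetCard, card_ne, ← Polynomial.C_mul_X_pow_eq_monomial]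
  · simp
  · intro I hI
    simp [(Finset.mem_powersetCard.1 hI).2]

lemma mMv_linearIndependent (n : ℕ) (j : Fin n) :
    LinearIndependent ℂ (fun ℓ : Fin n => mMv n j (ℓ : ℕ)) := by
  refine LinearIndependent.of_comp (MvPolynomial.aeval (fun p : Bool × {i : Fin n // i ≠ j} =>
      if p.1 then (Polynomial.X : Polynomial ℂ) else 1)).toLinearMap ?_
  rw [Fintype.linearIndependent_iff]
  intro g hg i
  have h := congrArg (fun p : Polynomial ℂ => p.coeff i) hg
  simp only [Function.comp_apply, AlgHom.toLinearMap_apply, aeval_mMv,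
    Polynomial.finsetSum_coeff, Polynomial.coeff_smul, Polynomial.coeff_monomial,
    Polynomial.coeff_zero, Fin.val_inj, smul_eq_mul, mul_ite, mul_zero, Finset.sum_ite_eq',
    Finset.mem_univ, if_true] at h
  have hne : ((n - 1).choose i : ℂ) ≠ 0 :=
    Nat.cast_ne_zero.2 (Nat.choose_pos (by omega)).ne'
  exact (mul_eq_zero.1 h).resolve_right hne

/-- Forward substitution in the triangular system `epsMv_eq_sum`. -/
lemma mMv_mem_span (n : ℕ) (j : Fin n) (ℓ : ℕ) (hℓ : ℓ < n) :
    mMv n j ℓ ∈ Submodule.span ℂ (Set.range fun k : Fin n => epsMv n j (k : ℕ)) := by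
  induction ℓ using Nat.strong_induction_on with
  | _ ℓ ih =>
    have h := epsMv_eq_sum n j ℓ
    rw [← Finset.add_sum_erase _ _ (Finset.mem_range.2 hℓ), ← sub_eq_iff_eq_add] at h
    rw [← Submodule.smul_mem_iff _ (transPoly_coeff_self_ne_zero n ℓ), ← h]
    refine Submodule.sub_mem _ (Submodule.subset_span ⟨⟨ℓ, hℓ⟩, rfl⟩)
      (Submodule.sum_mem _ fun m hm => ?_)
    obtain ⟨hne, hm⟩ := Finset.mem_erase.1 hm
    rcases lt_or_gt_of_ne hne with hlt | hgt
    · exact Submodule.smul_mem _ _ (ih m hlt (Finset.mem_range.1 hm))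
    · rw [transPoly_coeff_of_lt n hgt, zero_smul]
      exact Submodule.zero_mem _

lemma span_epsMv (n : ℕ) (j : Fin n) :
    Submodule.span ℂ (Set.range fun k : Fin n => epsMv n j (k : ℕ)) =
      Submodule.span ℂ (Set.range fun ℓ : Fin n => mMv n j (ℓ : ℕ)) := by
  apply le_antisymm <;> rw [Submodule.span_le]
  · rintro _ ⟨k, rfl⟩
    simp only [epsMv_eq_sum]
    exact Submodule.sum_mem _ fun m hm => Submodule.smul_mem _ _
      (Submodule.subset_span ⟨⟨m, Finset.mem_range.1 hm⟩, rfl⟩)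
  · rintro _ ⟨ℓ, rfl⟩
    exact mMv_mem_span n j ℓ ℓ.isLt

/-- The family `(ε_{j,0},…,ε_{j,n−1})` is linearly independent over ℂ and its span
coincides with the span of the family `(𝔪_{j,0},…,𝔪_{j,n−1})`, which is a basis of
that span. -/
theorem eps_linearIndependent_and_span (n : ℕ) (hn : 2 ≤ n) (j : Fin n) :
    LinearIndependent ℂ (fun k : Fin n => epsMv n j (k : ℕ)) ∧
    Submodule.span ℂ (Set.range fun k : Fin n => epsMv n j (k : ℕ)) =
      Submodule.span ℂ (Set.range fun ℓ : Fin n => mMv n j (ℓ : ℕ)) ∧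
    LinearIndependent ℂ (fun ℓ : Fin n => mMv n j (ℓ : ℕ)) := by
  have hm := mMv_linearIndependent n j
  refine ⟨?_, span_epsMv n j, hm⟩
  rw [linearIndependent_iff_card_eq_finrank_span, Set.finrank, span_epsMv]
  exact linearIndependent_iff_card_eq_finrank_span.1 hm
end

section
/- Fix an integer n ≥ 2. There exists an invertible n×n matrix B̃ with rational entries, depending only on n, with the following property: for all real numbers c₁,…,cₙ and all purely imaginary complex numbers s₁,…,sₙ, the matrix identity M̃ = Ṽ·B̃ holds, where Ṽ is the n×n complex matrix whose columns are, in order: for odd n, the columns Re ε_{•,0}; then for ℓ = 1,…,(n−1)/2 the pairs √−1·Im ε_{•,2ℓ}, Re ε_{•,2ℓ}; and for even n, for ℓ = 1,…,n/2 the pairs √−1·Im ε_{•,2ℓ−1}, Re ε_{•,2ℓ−1} (here Re ε_{•,k} and Im ε_{•,k} denote the column vectors of real and imaginary parts of (ε_{1,k},…,ε_{n,k})). Moreover B̃ can be chosen so that its last row is (0,…,0,1), its last column has entries B̃_{i,n} = 0 for i ≤ n−2 and B̃_{n−1,n} = B̃_{n,n} = 1, and B̃_{n−1,i} = 0 for i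 < n−1 and B̃_{n−2,i} = 0 for i < n−2. -/
/-!
Write `N = n - 1` and expand `∏_{i ≠ j} (c_i x - s_i (x + 2))` according to the set of factors from
which `c_i x` is chosen. This gives `ε_{j,k} = ∑_i e_{j,i} a_{i,k}`, where `e_{j,i}` (`mixedSym`) sums
the products with `i` factors `c` and `N - i` factors `s`, and the rational number `a_{i,k}`
(`expCoeff`) is the coefficient of `x^k` in `x^i (-(x + 2))^(N - i)`; in matrices, `M̃ = E A`.
Since the `s_i` are imaginary, conjugation multiplies `e_{j,i}` by `(-1)^(N - i)`, so `Re ε_{j,k}` and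
`√-1 Im ε_{j,k}` are the parts of that sum with `N - i` even and odd respectively. Hence `Ṽ = E A'`
with a rational matrix `A'` (`splitMatrix`). The columns of `Ṽ` are ordered such that `A'` is upper
triangular with nonzero diagonal, as is `A`, so `B̃ = A'⁻¹ A` is upper triangular, invertible and
satisfies `M̃ = Ṽ B̃`. Its last column is determined by `ε_{j,N} = Re ε_{j,N} + √-1 Im ε_{j,N}`, the
right-hand side being the sum of the last two columns of `Ṽ`.
-/

/-- `ε_{j,k}`, defined by `∏_{i≠j}((c_i − s_i)x − 2s_i) = Σ_k ε_{j,k} x^k`,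
for real `c_i` and (purely imaginary) complex `s_i`. -/
noncomputable def epsC (n : ℕ) (c : Fin n → ℝ) (s : Fin n → ℂ) (j : Fin n) (k : ℕ) : ℂ :=
  (∏ i ∈ Finset.univ.erase j,
      (Polynomial.C ((c i : ℂ) - s i) * Polynomial.X - Polynomial.C (2 * s i))).coeff k

/-- The coefficient of `x^k` in `x^i (-(x + 2))^(n - 1 - i)`, for `i ≤ n - 1`. -/
def expCoeff (n i k : ℕ) : ℚ :=
  if i ≤ k then (-1) ^ (n - 1 - i) * 2 ^ (n - 1 - i - (k - i)) * ((n - 1 - i).choose (k - i) : ℚ)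
  else 0

/-- The sum of all products of `i` factors `c` and `n - 1 - i` factors `s` over disjoint index sets
exhausting `{1, …, n} \ {j}`. -/
noncomputable def mixedSym (n : ℕ) (c : Fin n → ℝ) (s : Fin n → ℂ) (j : Fin n) (i : ℕ) : ℂ :=
  ∑ t ∈ Finset.powersetCard i (Finset.univ.erase j),
    (∏ a ∈ t, (c a : ℂ)) * ∏ a ∈ Finset.univ.erase j \ t, s a

/-- The matrix `A` with `M̃ = E A`. -/
def expMatrix (n : ℕ) : Matrix (Fin n) (Fin n) ℚ := Matrix.of fun i k => expCoeff n i k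

/-- The matrix `A'` with `Ṽ = E A'`: column `k` carries the part of column `k` of the coefficient
array with `n - 1 - i` even if `n - 1 - k` is even, and otherwise the part of column `k + 1` with
`n - 1 - i` odd. -/
def splitMatrix (n : ℕ) : Matrix (Fin n) (Fin n) ℚ := Matrix.of fun i k =>
  if (k : ℕ) % 2 ≠ n % 2 then (if (i : ℕ) % 2 ≠ n % 2 then expCoeff n i k else 0)
  else (if (i : ℕ) % 2 ≠ n % 2 then 0 else expCoeff n i (k + 1))

open Polynomial in
lemma epsC_eq_sum (n : ℕ) (c : Fin n → ℝ) (s : Fin n → ℂ) (j : Fin n) (k : ℕ) :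
    epsC n c s j k = ∑ i : Fin n, mixedSym n c s j i * (expCoeff n i k : ℂ) := by
  have hn : 0 < n := j.pos
  have hcard : (Finset.univ.erase j).card = n - 1 := by simp
  have hsplit : ∏ i ∈ Finset.univ.erase j, (C ((c i : ℂ) - s i) * X - C (2 * s i)) =
      ∏ i ∈ Finset.univ.erase j, (C (c i : ℂ) * X + C (s i) * (C (-1) * (X + C 2))) := by
    refine Finset.prod_congr rfl fun i _ => ?_
    simp only [C_sub, C_mul, C_neg, C_1]
    ring
  rw [epsC, hsplit, Finset.prod_add, Finset.sum_powerset, hcard, Nat.sub_add_cancel hn,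
    finsetSum_coeff, Finset.sum_range]
  refine Finset.sum_congr rfl fun i _ => ?_
  rw [finsetSum_coeff, mixedSym, Finset.sum_mul]
  refine Finset.sum_congr rfl fun t ht => ?_
  obtain ⟨hts, htc⟩ := Finset.mem_powersetCard.1 ht
  have hd : (Finset.univ.erase j \ t).card = n - 1 - i := by
    rw [Finset.card_sdiff_of_subset hts, hcard, htc]
  have hform : (∏ a ∈ t, C (c a : ℂ) * X) *
      ∏ a ∈ Finset.univ.erase j \ t, C (s a) * (C (-1) * (X + C 2)) =
      C (((∏ a ∈ t, (c a : ℂ)) * ∏ a ∈ Finset.univ.erase j \ t, s a) * (-1) ^ (n - 1 - (i : ℕ))) *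
        ((X + C 2) ^ (n - 1 - (i : ℕ)) * X ^ (i : ℕ)) := by
    simp only [Finset.prod_mul_distrib, Finset.prod_const, hd, htc, C_mul, C_pow, map_prod]
    ring
  rw [hform, coeff_C_mul, coeff_mul_X_pow', expCoeff]
  split_ifs with h
  · rw [coeff_X_add_C_pow]
    push_cast
    ring
  · simp

lemma conj_mixedSym (n : ℕ) (c : Fin n → ℝ) (s : Fin n → ℂ) (hs : ∀ i, (s i).re = 0)
    (j : Fin n) (i : ℕ) :
    (starRingEnd ℂ) (mixedSym n c s j i) = (-1) ^ (n - 1 - i) * mixedSym n c s j i := by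
  have hconj : ∀ a, (starRingEnd ℂ) (s a) = -1 * s a := fun a => by
    apply Complex.ext <;> simp [hs a]
  rw [mixedSym, map_sum, Finset.mul_sum]
  refine Finset.sum_congr rfl fun t ht => ?_
  obtain ⟨hts, htc⟩ := Finset.mem_powersetCard.1 ht
  have hd : (Finset.univ.erase j \ t).card = n - 1 - i := by
    rw [Finset.card_sdiff_of_subset hts, htc]
    simp
  simp only [map_mul, map_prod, Complex.conj_ofReal, hconj, Finset.prod_mul_distrib,
    Finset.prod_const, hd]
  ring

lemma conj_epsC (n : ℕ) (c : Fin n → ℝ) (s : Fin n → ℂ) (hs : ∀ i, (s i).re = 0)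
    (j : Fin n) (k : ℕ) :
    (starRingEnd ℂ) (epsC n c s j k) =
      ∑ i : Fin n, (-1) ^ (n - 1 - (i : ℕ)) * (mixedSym n c s j i * (expCoeff n i k : ℂ)) := by
  rw [epsC_eq_sum, map_sum]
  refine Finset.sum_congr rfl fun i _ => ?_
  rw [map_mul, conj_mixedSym n c s hs, map_ratCast]
  ring

lemma neg_one_pow_sub (n : ℕ) (i : Fin n) :
    (-1 : ℂ) ^ (n - 1 - (i : ℕ)) = if (i : ℕ) % 2 ≠ n % 2 then 1 else -1 := by
  have := i.2
  split_ifs with h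
  · exact Even.neg_one_pow (Nat.even_iff.2 (by omega))
  · exact Odd.neg_one_pow (Nat.odd_iff.2 (by omega))

lemma re_epsC (n : ℕ) (c : Fin n → ℝ) (s : Fin n → ℂ) (hs : ∀ i, (s i).re = 0)
    (j : Fin n) (k : ℕ) :
    ((epsC n c s j k).re : ℂ) = ∑ i : Fin n, mixedSym n c s j i *
      ((if (i : ℕ) % 2 ≠ n % 2 then expCoeff n i k else 0 : ℚ) : ℂ) := by
  rw [Complex.re_eq_add_conj, conj_epsC n c s hs, epsC_eq_sum, ← Finset.sum_add_distrib,
    Finset.sum_div]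
  refine Finset.sum_congr rfl fun i _ => ?_
  rw [neg_one_pow_sub]
  split_ifs <;> push_cast <;> ring

lemma I_mul_im_epsC (n : ℕ) (c : Fin n → ℝ) (s : Fin n → ℂ) (hs : ∀ i, (s i).re = 0)
    (j : Fin n) (k : ℕ) :
    Complex.I * ((epsC n c s j k).im : ℂ) = ∑ i : Fin n, mixedSym n c s j i *
      ((if (i : ℕ) % 2 ≠ n % 2 then 0 else expCoeff n i k : ℚ) : ℂ) := by
  have h : Complex.I * ((epsC n c s j k).im : ℂ) =
      epsC n c s j k - ((epsC n c s j k).re : ℂ) := by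
    rw [eq_sub_iff_add_eq', mul_comm]
    exact Complex.re_add_im _
  rw [h, re_epsC n c s hs, epsC_eq_sum, ← Finset.sum_sub_distrib]
  refine Finset.sum_congr rfl fun i _ => ?_
  split_ifs <;> push_cast <;> ring

lemma expMatrix_upper (n : ℕ) : (expMatrix n).BlockTriangular id := fun i k hik => by
  have : (k : ℕ) < i := hik
  exact if_neg (not_le.2 this)

/-- For `n - 1 - k` odd, column `k` of `A'` comes from column `k + 1` of the coefficient array, whose
entry in row `k + 1` is removed because `n - 1 - (k + 1)` is even. -/
lemma splitMatrix_upper (n : ℕ) : (splitMatrix n).BlockTriangular id := fun i k hik => by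
  have h : (k : ℕ) < i := hik
  simp only [splitMatrix, expCoeff, Matrix.of_apply]
  split_ifs <;> first | rfl | omega

lemma isUnit_expMatrix (n : ℕ) : IsUnit (expMatrix n) := by
  rw [Matrix.isUnit_iff_isUnit_det, Matrix.det_of_isUpperTriangular (expMatrix_upper n),
    isUnit_iff_ne_zero, Finset.prod_ne_zero_iff]
  intro i _
  simp [expMatrix, expCoeff]

lemma isUnit_splitMatrix (n : ℕ) : IsUnit (splitMatrix n) := by
  rw [Matrix.isUnit_iff_isUnit_det, Matrix.det_of_isUpperTriangular (splitMatrix_upper n),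
    isUnit_iff_ne_zero, Finset.prod_ne_zero_iff]
  intro i _
  have hi := i.2
  by_cases h : (i : ℕ) % 2 = n % 2
  · have : n - 1 - (i : ℕ) ≠ 0 := by omega
    simp [splitMatrix, expCoeff, h, this]
  · simp [splitMatrix, expCoeff, h]

/-- There is a fixed invertible rational matrix `B̃` with `M̃ = Ṽ·B̃` for all real `c_i`
and purely imaginary `s_i`, where the columns of `Ṽ` are: for odd `n`, `Re ε_{•,0}` and
the pairs `√−1·Im ε_{•,2ℓ}, Re ε_{•,2ℓ}` (`ℓ = 1,…,(n−1)/2`); for even `n`, the pairs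
`√−1·Im ε_{•,2ℓ−1}, Re ε_{•,2ℓ−1}` (`ℓ = 1,…,n/2`); i.e., column `k` (0-indexed) is
`Re ε_{•,k}` when `k % 2 ≠ n % 2` and `√−1·Im ε_{•,k+1}` otherwise. Moreover `B̃` has
the stated triangular structure in its last rows and columns. -/
theorem exists_rational_change_of_basis (n : ℕ) (hn : 2 ≤ n) :
    ∃ Btil : Matrix (Fin n) (Fin n) ℚ,
      IsUnit Btil ∧
      (∀ j : Fin n, Btil ⟨n - 1, by omega⟩ j = if (j : ℕ) = n - 1 then 1 else 0) ∧
      (∀ i : Fin n, (i : ℕ) < n - 2 → Btil i ⟨n - 1, by omega⟩ = 0) ∧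
      Btil ⟨n - 2, by omega⟩ ⟨n - 1, by omega⟩ = 1 ∧
      Btil ⟨n - 1, by omega⟩ ⟨n - 1, by omega⟩ = 1 ∧
      (∀ j : Fin n, (j : ℕ) < n - 2 → Btil ⟨n - 2, by omega⟩ j = 0) ∧
      (∀ j : Fin n, (j : ℕ) < n - 3 → Btil ⟨n - 3, by omega⟩ j = 0) ∧
      ∀ (c : Fin n → ℝ) (s : Fin n → ℂ), (∀ i, (s i).re = 0) →
        (Matrix.of fun j k : Fin n => epsC n c s j (k : ℕ)) =
          (Matrix.of fun j k : Fin n =>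
              if (k : ℕ) % 2 ≠ n % 2 then ((epsC n c s j (k : ℕ)).re : ℂ)
              else Complex.I * ((epsC n c s j ((k : ℕ) + 1)).im : ℂ)) *
            Btil.map (fun q => (q : ℂ)) := by
  have hS : IsUnit (splitMatrix n).det := (Matrix.isUnit_iff_isUnit_det _).1 (isUnit_splitMatrix n)
  have : Invertible (splitMatrix n) := (isUnit_splitMatrix n).invertible
  have hup : ((splitMatrix n)⁻¹ * expMatrix n).BlockTriangular id :=
    (Matrix.blockTriangular_inv_of_blockTriangular (splitMatrix_upper n)).mul (expMatrix_upper n)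
  have hcol : ∀ l : Fin n, expMatrix n l ⟨n - 1, by omega⟩ =
      splitMatrix n l ⟨n - 1, by omega⟩ + splitMatrix n l ⟨n - 2, by omega⟩ := fun l => by
    have h1 : (n - 1) % 2 ≠ n % 2 := by omega
    have h2 : ¬ (n - 2) % 2 ≠ n % 2 := by omega
    have h3 : n - 2 + 1 = n - 1 := by omega
    simp only [expMatrix, splitMatrix, Matrix.of_apply, if_pos h1, if_neg h2, h3]
    split_ifs <;> simp
  have hlast : ∀ i : Fin n, ((splitMatrix n)⁻¹ * expMatrix n) i ⟨n - 1, by omega⟩ =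
      (1 : Matrix (Fin n) (Fin n) ℚ) i ⟨n - 1, by omega⟩ +
        (1 : Matrix (Fin n) (Fin n) ℚ) i ⟨n - 2, by omega⟩ := fun i => by
    rw [← Matrix.nonsing_inv_mul _ hS]
    simp only [Matrix.mul_apply, hcol, mul_add, Finset.sum_add_distrib]
  refine ⟨(splitMatrix n)⁻¹ * expMatrix n, ?_, ?_, ?_, ?_, ?_, ?_, ?_, ?_⟩
  · exact ((Matrix.isUnit_nonsing_inv_iff).2 (isUnit_splitMatrix n)).mul (isUnit_expMatrix n)
  · intro j
    split_ifs with h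
    · have hj : j = ⟨n - 1, by omega⟩ := Fin.ext h
      have h2 : n - 1 ≠ n - 2 := by omega
      rw [hj, hlast]
      simp [h2]
    · exact hup (show (j : ℕ) < n - 1 by omega)
  · intro i hi
    have h1 : (i : ℕ) ≠ n - 1 := by omega
    have h2 : (i : ℕ) ≠ n - 2 := by omega
    rw [hlast]
    simp [Fin.ext_iff, h1, h2]
  · have h1 : n - 2 ≠ n - 1 := by omega
    rw [hlast]
    simp [h1]
  · have h1 : n - 1 ≠ n - 2 := by omega
    rw [hlast]
    simp [h1]
  · exact fun j hj => hup (show (j : ℕ) < n - 2 from hj)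
  · exact fun j hj => hup (show (j : ℕ) < n - 3 from hj)
  · intro c s hs
    have hM : (Matrix.of fun j k : Fin n => epsC n c s j (k : ℕ)) =
        (Matrix.of fun j i : Fin n => mixedSym n c s j i) *
          (expMatrix n).map (fun q => (q : ℂ)) := by
      ext j k
      simp only [Matrix.mul_apply, Matrix.of_apply, Matrix.map_apply, epsC_eq_sum, expMatrix]
    have hV : (Matrix.of fun j k : Fin n =>
        if (k : ℕ) % 2 ≠ n % 2 then ((epsC n c s j (k : ℕ)).re : ℂ)
        else Complex.I * ((epsC n c s j ((k : ℕ) + 1)).im : ℂ)) =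
        (Matrix.of fun j i : Fin n => mixedSym n c s j i) *
          (splitMatrix n).map (fun q => (q : ℂ)) := by
      ext j k
      simp only [Matrix.mul_apply, Matrix.of_apply, Matrix.map_apply, splitMatrix]
      by_cases h : (k : ℕ) % 2 ≠ n % 2
      · simp only [if_pos h]
        exact re_epsC n c s hs j k
      · simp only [if_neg h]
        exact I_mul_im_epsC n c s hs j (k + 1)
    have hmap : (splitMatrix n).map (fun q => (q : ℂ)) *
        ((splitMatrix n)⁻¹ * expMatrix n).map (fun q => (q : ℂ)) =
        (expMatrix n).map (fun q => (q : ℂ)) := by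
      have h := Matrix.map_mul (L := splitMatrix n) (M := (splitMatrix n)⁻¹ * expMatrix n)
        (f := Rat.castHom ℂ)
      rw [Matrix.mul_nonsing_inv_cancel_left _ _ hS] at h
      exact h.symm
    rw [hV, hM, Matrix.mul_assoc, hmap]
end

section
/- Fix an integer g ≥ 2. There exists an invertible g×g matrix ℬ with entries in ℚ(√−1), depending only on g, with the following property: for all real numbers φ₁,…,φ_g, the identity ℳ = 𝒱·ℬ holds, where 𝒱 is the g×g real matrix whose columns are, in order: for odd g, the column Re ε_{•,0}, then for ℓ = 1,…,(g−1)/2 the pairs Im ε_{•,2ℓ}, Re ε_{•,2ℓ}; and for even g, for ℓ = 1,…,g/2 the pairs Im ε_{•,2ℓ−1}, Re ε_{•,2ℓ−1} (here Re ε_{•,k} and Im ε_{•,k} denote the column vectors of real and imaginary parts of (ε_{1,k},…,ε_{g,k})). Moreover ℬ can be chosen so that its last row is (0,…,0,1), its last column has entries ℬ_{i,g} = 0 for i ≤ g−2, ℬ_{g−1,g} = √−1 and ℬ_{g,g} = 1, and ℬ_{g−1,i} = 0 for i < g−1 with ℬ_{g−1,g−1} ∈ {2√−1, −2√−1}. 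-/
/-!
Put `n = g - 1`. Each factor of the product is `a ζ - b` with `a = e^{-iφ}`, `b = 2i sin φ`, and
`conj a = a + b`, `conj b = -b`; so conjugating the coefficients of the factor gives
`a ζ + b (1 + ζ)`, which is minus `1 + ζ` times the factor at `-ζ / (1 + ζ)`. Multiplying over the
`n` factors (`map_conj_prod`) and comparing coefficients (`conj_epsP`) yields
`conj ε_k = ∑_{m ≤ k} (-1)^(n-m) * choose (n-m) (k-m) * ε_m`.

For `k + 1 ≡ n` mod 2 the terms `m = k + 1` and `m = k` are `ε_{k+1}` and `-(n-k) ε_k`, so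
`(n-k) ε_k = 2i Im ε_{k+1} + ∑_{m < k} (rational) ε_m` (`epsP_recurrence`), whereas for `k ≡ n`
simply `ε_k = Re ε_k + i Im ε_k`, and `ε_0` is real when `n` is even (`epsP_zero_im`). Recursively,
`ε_k` is a Gaussian-rational combination of the first `k + 1` columns of `𝒱`, with nonzero
coefficient at the last of these (`exists_column`). Hence `ℬ` is upper triangular with nonzero
diagonal, and the prescribed entries are read off from the columns.
-/

open Complex

open Finset Polynomial in
/-- Conjugating the coefficients of `P = ∏ (e^{-iφ} X - 2i sin φ)`, a product of `n` factors, gives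
`(-1)^n (1 + X)^n P(-X / (1 + X))`, written here without denominators. -/
lemma map_conj_prod {ι : Type*} [DecidableEq ι] (φ : ι → ℝ) (s : Finset ι) :
    (∏ i ∈ s, (C (Complex.exp (-(I * (φ i : ℂ)))) * X - C (2 * I * Complex.sin ((φ i : ℂ))))).natDegree
        ≤ s.card ∧
    (∏ i ∈ s, (C (Complex.exp (-(I * (φ i : ℂ)))) * X -
        C (2 * I * Complex.sin ((φ i : ℂ))))).map (starRingEnd ℂ) =
      ∑ m ∈ range (s.card + 1), C ((-1) ^ (s.card - m) *
        (∏ i ∈ s, (C (Complex.exp (-(I * (φ i : ℂ)))) * X -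
          C (2 * I * Complex.sin ((φ i : ℂ))))).coeff m) * (X ^ m * (1 + X) ^ (s.card - m)) := by
  induction s using Finset.induction_on with
  | empty => simp
  | insert x s hx ih =>
    obtain ⟨hd, ih⟩ := ih
    rw [prod_insert hx, card_insert_of_notMem hx]
    set P := ∏ i ∈ s, (C (Complex.exp (-(I * (φ i : ℂ)))) * X -
        C (2 * I * Complex.sin ((φ i : ℂ)))) with hP
    set n := s.card
    have hab : (starRingEnd ℂ) (Complex.exp (-(I * (φ x : ℂ)))) =
        Complex.exp (-(I * (φ x : ℂ))) + 2 * I * Complex.sin (φ x : ℂ) := by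
      rw [← Complex.exp_conj]
      simp only [map_neg, map_mul, conj_I, conj_ofReal, neg_mul, neg_neg]
      rw [mul_comm I, Complex.exp_mul_I, ← neg_mul, Complex.exp_mul_I, Complex.cos_neg,
        Complex.sin_neg]
      ring
    have hb : (starRingEnd ℂ) (2 * I * Complex.sin (φ x : ℂ)) = -(2 * I * Complex.sin (φ x : ℂ)) := by
      rw [map_mul, map_mul, conj_I, ← Complex.sin_conj, conj_ofReal, Complex.conj_ofNat]
      ring
    generalize Complex.exp (-(I * (φ x : ℂ))) = a at *
    generalize 2 * I * Complex.sin (φ x : ℂ) = b at *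
    refine ⟨?_, ?_⟩
    · refine natDegree_mul_le.trans ?_
      have : (C a * X - C b).natDegree ≤ 1 := by
        rw [sub_eq_add_neg, ← C_neg]
        exact natDegree_linear_le
      omega
    · have hzero : P.coeff (n + 1) = 0 := coeff_eq_zero_of_natDegree_lt (by omega)
      have hX : ∑ m ∈ range (n + 1 + 1), C ((-1) ^ (n + 1 - m) * (C a * X * P).coeff m) *
          (X ^ m * (1 + X) ^ (n + 1 - m)) = C a * X * P.map (starRingEnd ℂ) := by
        rw [sum_range_succ', ih, mul_sum]
        simp only [mul_assoc, coeff_C_mul, coeff_X_mul, coeff_X_mul_zero, Nat.add_sub_add_right]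
        simp only [mul_zero, map_zero, zero_mul, add_zero]
        refine sum_congr rfl fun m _ => ?_
        simp only [map_mul]
        ring
      have hC : ∑ m ∈ range (n + 1 + 1), C ((-1) ^ (n + 1 - m) * (C b * P).coeff m) *
          (X ^ m * (1 + X) ^ (n + 1 - m)) = -(C b * (1 + X) * P.map (starRingEnd ℂ)) := by
        rw [sum_range_succ, ih, mul_sum, coeff_C_mul, hzero, ← sum_neg_distrib]
        simp only [mul_zero, map_zero, zero_mul, add_zero]
        refine sum_congr rfl fun m hm => ?_
        rw [Nat.succ_sub (by simpa [Nat.lt_succ_iff] using hm), coeff_C_mul]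
        simp only [map_mul, pow_succ, map_neg, map_one]
        ring
      have hsplit : ∀ m, C ((-1) ^ (n + 1 - m) * ((C a * X - C b) * P).coeff m) *
          (X ^ m * (1 + X) ^ (n + 1 - m)) =
          C ((-1) ^ (n + 1 - m) * (C a * X * P).coeff m) * (X ^ m * (1 + X) ^ (n + 1 - m)) -
          C ((-1) ^ (n + 1 - m) * (C b * P).coeff m) * (X ^ m * (1 + X) ^ (n + 1 - m)) := by
        intro m
        rw [sub_mul, coeff_sub, mul_sub, C_sub, sub_mul]
      rw [sum_congr rfl fun m _ => hsplit m, sum_sub_distrib, hX, hC]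
      simp only [Polynomial.map_mul, Polynomial.map_sub, map_C, map_X, hab, hb, map_add, map_neg]
      ring

open Finset in
lemma conj_epsP {g : ℕ} (φ : Fin g → ℝ) (j : Fin g) {k : ℕ} (hk : k < g) :
    (starRingEnd ℂ) (epsP g φ j k) = ∑ m ∈ range (k + 1),
      (-1) ^ (g - 1 - m) * ((g - 1 - m).choose (k - m) : ℂ) * epsP g φ j m := by
  have h := (map_conj_prod φ (univ.erase j)).2
  rw [card_erase_of_mem (mem_univ j), card_univ, Fintype.card_fin] at h
  have h2 := congrArg (fun p => Polynomial.coeff p k) h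
  simp only [Polynomial.coeff_map, Polynomial.finsetSum_coeff, Polynomial.coeff_C_mul,
    Polynomial.coeff_X_pow_mul', Polynomial.coeff_one_add_X_pow] at h2
  unfold epsP
  rw [h2]
  symm
  -- the terms with `m > k` vanish, since `X ^ m` has no coefficient in degree `k`
  refine (sum_congr rfl fun m hm => ?_).trans (sum_subset (range_subset_range.2 (by omega)) ?_)
  · rw [if_pos (by simpa [Nat.lt_succ_iff] using hm)]
    ring
  · intro m _ hm
    rw [if_neg (by simpa [Nat.lt_succ_iff] using hm), mul_zero]

lemma epsP_zero_im {g : ℕ} (φ : Fin g → ℝ) (j : Fin g) (hg : 0 % 2 ≠ g % 2) :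
    (epsP g φ j 0).im = 0 := by
  have h := conj_epsP φ j (k := 0) (by omega)
  have he : Even (g - 1) := by rw [Nat.even_iff]; omega
  simp only [zero_add, Finset.sum_range_one, Nat.sub_zero, he.neg_one_pow, Nat.choose_zero_right,
    Nat.cast_one, one_mul] at h
  exact Complex.conj_eq_iff_im.1 h

open Finset in
/-- The conjugation identity for `ε_{k+1}`, solved for `ε_k`. -/
lemma epsP_recurrence {g : ℕ} (φ : Fin g → ℝ) (j : Fin g) {k : ℕ} (hk : k < g)
    (hp : k % 2 = g % 2) :
    epsP g φ j k = ((epsP g φ j (k + 1)).im : ℂ) * (2 * I / ((g - 1 - k : ℕ) : ℂ)) +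
      ∑ m ∈ range k, epsP g φ j m *
        (((-1) ^ (g - 1 - m) * ((g - 1 - m).choose (k + 1 - m) : ℚ) / ((g - 1 - k : ℕ) : ℚ) : ℚ) : ℂ)
      := by
  have h := conj_epsP φ j (k := k + 1) (by omega)
  have he : Even (g - 1 - (k + 1)) := by rw [Nat.even_iff]; omega
  have ho : Odd (g - 1 - k) := by rw [Nat.odd_iff]; omega
  have hn : ((g - 1 - k : ℕ) : ℂ) ≠ 0 := by
    rw [Nat.cast_ne_zero]; omega
  rw [sum_range_succ, sum_range_succ, he.neg_one_pow, ho.neg_one_pow, Nat.sub_self,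
    Nat.choose_zero_right, Nat.add_sub_cancel_left, Nat.choose_one_right] at h
  have h3 := Complex.sub_conj (epsP g φ j (k + 1))
  have hs : ∑ m ∈ range k, epsP g φ j m *
        (((-1) ^ (g - 1 - m) * ((g - 1 - m).choose (k + 1 - m) : ℚ) / ((g - 1 - k : ℕ) : ℚ) : ℚ) : ℂ)
      = (∑ m ∈ range k, (-1) ^ (g - 1 - m) * ((g - 1 - m).choose (k + 1 - m) : ℂ) *
          epsP g φ j m) / ((g - 1 - k : ℕ) : ℂ) := by
    rw [sum_div]
    refine sum_congr rfl fun m _ => ?_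
    push_cast
    ring
  rw [hs]
  push_cast at h h3
  field_simp
  linear_combination h + h3

/-- Membership in `ℚ(√−1)`. -/
def IsGaussRat (z : ℂ) : Prop := ∃ q r : ℚ, z = (q : ℂ) + (r : ℂ) * I

lemma isGaussRat_zero : IsGaussRat 0 := ⟨0, 0, by simp⟩

lemma isGaussRat_one : IsGaussRat 1 := ⟨1, 0, by simp⟩

lemma isGaussRat_I : IsGaussRat I := ⟨0, 1, by simp⟩

lemma IsGaussRat.add {z w : ℂ} : IsGaussRat z → IsGaussRat w → IsGaussRat (z + w) := by
  rintro ⟨q, r, rfl⟩ ⟨q', r', rfl⟩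
  exact ⟨q + q', r + r', by push_cast; ring⟩

lemma IsGaussRat.mul_rat {z : ℂ} (t : ℚ) : IsGaussRat z → IsGaussRat (z * (t : ℂ)) := by
  rintro ⟨q, r, rfl⟩
  exact ⟨q * t, r * t, by push_cast; ring⟩

lemma IsGaussRat.sum {ι : Type*} (s : Finset ι) (f : ι → ℂ) (h : ∀ i ∈ s, IsGaussRat (f i)) :
    IsGaussRat (∑ i ∈ s, f i) :=
  Finset.sum_induction f IsGaussRat (fun _ _ => IsGaussRat.add) isGaussRat_zero h

/-- The `(j, k)` entry of `𝒱`; the column index `k` counts from `0`. -/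
noncomputable def vEntry (g : ℕ) (φ : Fin g → ℝ) (j : Fin g) (k : ℕ) : ℝ :=
  if k % 2 ≠ g % 2 then (epsP g φ j k).re else (epsP g φ j (k + 1)).im

open Finset in
/-- Column `k` of `ℬ`, as a function of the row index (only rows below `g` matter). -/
lemma exists_column (g k : ℕ) (hk : k < g) : ∃ c : ℕ → ℂ, (∀ i, IsGaussRat (c i)) ∧
    (∀ i, k < i → c i = 0) ∧
    (c k = if k % 2 ≠ g % 2 then 1 else 2 * I / ((g - 1 - k : ℕ) : ℂ)) ∧
    (k % 2 ≠ g % 2 → ∀ i, i < k → c i = if i + 1 = k then I else 0) ∧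
    ∀ (φ : Fin g → ℝ) (j : Fin g), epsP g φ j k = ∑ i ∈ range g, (vEntry g φ j i : ℂ) * c i := by
  induction k using Nat.strong_induction_on with
  | _ k ih =>
  by_cases hp : k % 2 ≠ g % 2
  · refine ⟨fun i => (if i = k then 1 else 0) + (if i + 1 = k then I else 0), ?_, ?_, ?_, ?_, ?_⟩
    · intro i
      refine IsGaussRat.add ?_ ?_ <;> split_ifs <;>
        simp only [isGaussRat_zero, isGaussRat_one, isGaussRat_I]
    · intro i hi
      simp only [if_neg (show i ≠ k by omega), if_neg (show i + 1 ≠ k by omega), add_zero]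
    · simp [hp]
    · intro _ i hi
      simp only [if_neg (show i ≠ k by omega), zero_add]
    · intro φ j
      simp only [mul_add, sum_add_distrib, mul_ite, mul_one, mul_zero]
      rw [sum_ite_eq', if_pos (mem_range.2 hk), vEntry, if_pos hp]
      rcases k with _ | k
      · have := epsP_zero_im φ j hp
        rw [sum_eq_zero (fun i _ => by simp), add_zero]
        apply Complex.ext <;> simp [this]
      · simp only [Nat.add_right_cancel_iff]
        rw [sum_ite_eq', if_pos (mem_range.2 (by omega)), vEntry, if_neg (by omega),
          Complex.re_add_im]
  · rw [not_not] at hp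
    have ih' : ∀ m : ℕ, ∃ c : ℕ → ℂ, m < k → ((∀ i, IsGaussRat (c i)) ∧ (∀ i, m < i → c i = 0) ∧
        ∀ (φ : Fin g → ℝ) (j : Fin g),
          epsP g φ j m = ∑ i ∈ range g, (vEntry g φ j i : ℂ) * c i) := by
      intro m
      by_cases hm : m < k
      · obtain ⟨c, h1, h2, -, -, h5⟩ := ih m hm (by omega)
        exact ⟨c, fun _ => ⟨h1, h2, h5⟩⟩
      · exact ⟨0, fun h => absurd h hm⟩
    choose c hc using ih'
    set q : ℕ → ℚ := fun m => (-1) ^ (g - 1 - m) * ((g - 1 - m).choose (k + 1 - m) : ℚ) /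
      ((g - 1 - k : ℕ) : ℚ) with hq
    have hzero : ∀ i, k ≤ i → ∑ m ∈ range k, c m i * (q m : ℂ) = 0 := fun i hi =>
      sum_eq_zero fun m hm => by
        have hm := mem_range.1 hm
        rw [(hc m hm).2.1 i (by omega), zero_mul]
    refine ⟨fun i => (if i = k then 2 * I / ((g - 1 - k : ℕ) : ℂ) else 0) +
      ∑ m ∈ range k, c m i * (q m : ℂ), ?_, ?_, ?_, ?_, ?_⟩
    · intro i
      refine IsGaussRat.add ?_ (IsGaussRat.sum _ _ fun m hm =>
        ((hc m (mem_range.1 hm)).1 i).mul_rat _)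
      split_ifs
      · exact ⟨0, 2 / ((g - 1 - k : ℕ) : ℚ), by push_cast; ring⟩
      · exact isGaussRat_zero
    · intro i hi
      simp only [hzero i hi.le, if_neg hi.ne', add_zero]
    · simp [hzero k le_rfl, hp]
    · exact fun h => absurd hp h
    · intro φ j
      simp only [mul_add, sum_add_distrib, mul_ite, mul_zero]
      rw [sum_ite_eq', if_pos (mem_range.2 hk), vEntry, if_neg (not_not.2 hp),
        epsP_recurrence φ j hk hp]
      congr 1
      simp only [mul_sum]
      rw [sum_comm]
      refine sum_congr rfl fun m hm => ?_
      rw [(hc m (mem_range.1 hm)).2.2 φ j, sum_mul]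
      simp only [hq, mul_assoc]

/-- There is a fixed invertible matrix `ℬ` with entries in `ℚ(√−1)` such that
`ℳ = 𝒱·ℬ` for all real `φ₁,…,φ_g`, where the columns of the real matrix `𝒱` are:
for odd `g`, `Re ε_{•,0}` and the pairs `Im ε_{•,2ℓ}, Re ε_{•,2ℓ}`; for even `g`, the
pairs `Im ε_{•,2ℓ−1}, Re ε_{•,2ℓ−1}`; i.e., column `k` (0-indexed) is `Re ε_{•,k}`
when `k % 2 ≠ g % 2` and `Im ε_{•,k+1}` otherwise. Moreover `ℬ` has the stated
structure in its last rows and columns. -/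
theorem exists_gaussian_rational_change_of_basis (g : ℕ) (hg : 2 ≤ g) :
    ∃ B : Matrix (Fin g) (Fin g) ℂ,
      (∀ i j : Fin g, ∃ q r : ℚ, B i j = (q : ℂ) + (r : ℂ) * I) ∧
      IsUnit B ∧
      (∀ j : Fin g, B ⟨g - 1, by omega⟩ j = if (j : ℕ) = g - 1 then 1 else 0) ∧
      (∀ i : Fin g, (i : ℕ) < g - 2 → B i ⟨g - 1, by omega⟩ = 0) ∧
      B ⟨g - 2, by omega⟩ ⟨g - 1, by omega⟩ = I ∧
      B ⟨g - 1, by omega⟩ ⟨g - 1, by omega⟩ = 1 ∧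
      (∀ j : Fin g, (j : ℕ) < g - 2 → B ⟨g - 2, by omega⟩ j = 0) ∧
      (B ⟨g - 2, by omega⟩ ⟨g - 2, by omega⟩ = 2 * I ∨
        B ⟨g - 2, by omega⟩ ⟨g - 2, by omega⟩ = -(2 * I)) ∧
      ∀ φ : Fin g → ℝ,
        (Matrix.of fun j k : Fin g => epsP g φ j (k : ℕ)) =
          ((Matrix.of fun j k : Fin g =>
              if (k : ℕ) % 2 ≠ g % 2 then (epsP g φ j (k : ℕ)).re
              else (epsP g φ j ((k : ℕ) + 1)).im :
            Matrix (Fin g) (Fin g) ℝ).map fun t => (t : ℂ)) * B := by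
  choose c hrat hupper hdiag hlow heps using fun k : Fin g => exists_column g k k.2
  have htri : ∀ i j : Fin g, j < i → c j i = 0 := fun i j h => hupper j i h
  refine ⟨Matrix.of fun i k : Fin g => c k i, fun i j => hrat j i, ?_, ?_, ?_, ?_, ?_, ?_, ?_, ?_⟩
  · rw [Matrix.isUnit_iff_isUnit_det, Matrix.det_of_isUpperTriangular (M := Matrix.of fun i k : Fin g => c k i) (fun i j h => htri i j h),
      isUnit_iff_ne_zero, Finset.prod_ne_zero_iff]
    intro k _
    rw [Matrix.of_apply, hdiag]
    split_ifs with h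
    · exact one_ne_zero
    · -- `g - 1` has the parity opposite to `g`, so here `k < g - 1`
      have hn : ((g - 1 - (k : ℕ) : ℕ) : ℂ) ≠ 0 := by
        rw [Nat.cast_ne_zero]
        have := k.2
        omega
      exact div_ne_zero (mul_ne_zero two_ne_zero I_ne_zero) hn
  · intro j
    split_ifs with h
    · have hj : j = ⟨g - 1, by omega⟩ := Fin.ext h
      rw [hj]
      exact (hdiag _).trans (if_pos (by simp only; omega))
    · exact hupper j _ (by have := j.2; simp only; omega)
  · intro i hi
    exact (hlow ⟨g - 1, by omega⟩ (by simp only; omega) i (by simp only; omega)).trans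
      (if_neg (by simp only; omega))
  · exact (hlow ⟨g - 1, by omega⟩ (by simp only; omega) (g - 2) (by simp only; omega)).trans
      (if_pos (by simp only; omega))
  · exact (hdiag ⟨g - 1, by omega⟩).trans (if_pos (by simp only; omega))
  · exact fun j hj => hupper j _ hj
  · left
    refine (hdiag ⟨g - 2, by omega⟩).trans ((if_neg (by simp only; omega)).trans ?_)
    have : g - 1 - (g - 2) = 1 := by omega
    simp [this]
  · intro φ
    ext j k
    rw [Matrix.mul_apply, Matrix.of_apply, heps k φ j, Finset.sum_range]
    rfl
end
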